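/- arXiv:2406.06766 — 3 statements merged into one kernel-verified Lean document; each statement's English description precedes it below -/
import Mathlib

section
/- Let k be a field, R = k[x_1,…,x_d], T = k[y_1,…,y_n], and B = R ⊗_k T, bigraded by bideg x_i = (1,0) and bideg y_j = (0,1). Let f_1,…,f_d be a B-regular sequence of bihomogeneous elements contained in m = (x_1,…,x_d)B with bideg f_i = (α_i,β_i), set S = B/(f_1,…,f_d), δ = (Σα_i) − d, τ = Σβ_i, and A = H^0_m(S). Then A_i = 0 for all i < 0 and all i > δ, and there is a graded isomorphism of T-modules A_δ ≅ T(−τ). -/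
/-!
STATEMENT 3: With `B = k[x_1,…,x_d] ⊗_k k[y_1,…,y_n]` bigraded as usual,
`f_1,…,f_d ⊆ m = (x_1,…,x_d)B` a bihomogeneous `B`-regular sequence with
`bideg f_i = (α_i, β_i)`, `S = B/(f_1,…,f_d)`, `δ = (Σα_i) − d`, `τ = Σβ_i` and
`A = H⁰_m(S)`:  `A_i = 0` for `i < 0` and `i > δ`, and there is a graded isomorphism
of `T`-modules `A_δ ≅ T(−τ)`.
-/


/-! ### Generic part: exchange argument in a graded Noetherian ring -/

namespace Stmt3Core

section Generic

variable {R : Type*} [CommRing R] {G : Type*} 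

/-- `a` is a nonzerodivisor modulo `J`. -/
def RegOn (J : Ideal R) (a : R) : Prop := ∀ r, a * r ∈ J → r ∈ J

/-- A list (with degrees) is weakly regular modulo `J`. -/
def Reg : Ideal R → List (R × G) → Prop
  | _, [] => True
  | J, p :: l => RegOn J p.1 ∧ Reg (J ⊔ Ideal.span {p.1}) l

/-- `J + (l)`. -/
def addL : Ideal R → List (R × G) → Ideal R
  | J, [] => J
  | J, p :: l => addL (J ⊔ Ideal.span {p.1}) l

/-- `b` is a nonzerodivisor modulo `J + (l')` for all prefixes `l'` of `l`. -/
def AllReg (b : R) : Ideal R → List (R × G) → Prop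
  | J, [] => RegOn J b
  | J, p :: l => RegOn J b ∧ AllReg b (J ⊔ Ideal.span {p.1}) l

theorem addL_append_singleton (l : List (R × G)) (a : R × G) : ∀ J : Ideal R,
    addL J (l ++ [a]) = addL J l ⊔ Ideal.span {a.1} := by
  induction l with
  | nil => intro J; rfl
  | cons p l ih => intro J; exact ih _

theorem addL_sup (l : List (R × G)) : ∀ J K : Ideal R, addL (J ⊔ K) l = addL J l ⊔ K := by
  induction l with
  | nil => intro J K; rfl
  | cons p l ih =>
    intro J K
    show addL (J ⊔ K ⊔ _) l = addL (J ⊔ _) l ⊔ K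
    rw [← ih, sup_right_comm]

theorem reg_append_singleton (l : List (R × G)) (a : R × G) : ∀ J : Ideal R,
    Reg J (l ++ [a]) ↔ Reg J l ∧ RegOn (addL J l) a.1 := by
  induction l with
  | nil => intro J; simp [Reg, addL]
  | cons p l ih => intro J; simp only [List.cons_append, Reg, addL, ih]; tauto

theorem AllReg.head {b : R} {J : Ideal R} {l : List (R × G)} (h : AllReg b J l) : RegOn J b := by
  cases l with
  | nil => exact h
  | cons p l => exact h.1

theorem AllReg.last {b : R} {l : List (R × G)} : ∀ {J : Ideal R}, AllReg b J l →
    RegOn (addL J l) b := by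
  induction l with
  | nil => intro J h; exact h
  | cons p l ih => intro J h; exact ih h.2

theorem AllReg.reg {b : R} {l : List (R × G)} : ∀ {J : Ideal R}, AllReg b J l → Reg J l →
    Reg (J ⊔ Ideal.span {b}) l := by
  induction l with
  | nil => intro J _ _; trivial
  | cons p l ih =>
    intro J h hr
    refine ⟨?_, ?_⟩
    · intro r hrr
      obtain ⟨s, j, hj, hs⟩ : ∃ s, ∃ j ∈ J, p.1 * r = j + s * b := by
        obtain ⟨j, hj, y, hy, e⟩ := Submodule.mem_sup.1 hrr
        obtain ⟨s, rfl⟩ := Ideal.mem_span_singleton'.1 hy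
        exact ⟨s, j, hj, e.symm⟩
      have h1 : b * s ∈ J ⊔ Ideal.span {p.1} := by
        have : b * s = -j + r * p.1 := by linear_combination -hs
        rw [this]
        exact Submodule.add_mem_sup (J.neg_mem hj) (Ideal.mem_span_singleton'.2 ⟨r, rfl⟩)
      have h2 := h.2.head s h1
      obtain ⟨j', hj', y, hy, e⟩ := Submodule.mem_sup.1 h2
      obtain ⟨t, rfl⟩ := Ideal.mem_span_singleton'.1 hy
      have h3 : r - b * t ∈ J := by
        apply hr.1
        have : p.1 * (r - b * t) = j + b * j' := by
          linear_combination hs - b * e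
        rw [this]
        exact J.add_mem hj (J.mul_mem_left _ hj')
      have : r = (r - b * t) + t * b := by ring
      rw [this]
      exact Submodule.add_mem_sup h3 (Ideal.mem_span_singleton'.2 ⟨t, rfl⟩)
    · have := ih h.2 hr.2
      rwa [sup_right_comm] at this

theorem exists_primes_regOn [IsNoetherianRing R] (J : Ideal R) :
    ∃ P : Finset (Ideal R), (∀ p ∈ P, p.IsPrime) ∧ (∀ b, RegOn J b ↔ ∀ p ∈ P, b ∉ p) := by
  classical
  refine ⟨(associatedPrimes.finite R (R ⧸ J)).toFinset, ?_, ?_⟩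
  · intro p hp
    simp only [Set.Finite.mem_toFinset] at hp
    exact hp.1
  · intro b
    have h := biUnion_associatedPrimes_eq_compl_regular R (R ⧸ J)
    have h2 : RegOn J b ↔ IsSMulRegular (R ⧸ J) b := by
      rw [isSMulRegular_iff_right_eq_zero_of_smul]
      constructor
      · intro hb x
        obtain ⟨r, rfl⟩ := Ideal.Quotient.mk_surjective x
        intro hx
        rw [← Ideal.Quotient.mk_eq_mk, ← Submodule.Quotient.mk_smul, Submodule.Quotient.mk_eq_zero] at hx
        rw [← Ideal.Quotient.mk_eq_mk, Submodule.Quotient.mk_eq_zero]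
        exact hb r hx
      · intro hb r hr
        have := hb (Submodule.Quotient.mk r) (by
          rw [← Submodule.Quotient.mk_smul, Submodule.Quotient.mk_eq_zero]; exact hr)
        rwa [Submodule.Quotient.mk_eq_zero] at this
    rw [h2]
    have h3 := Set.ext_iff.1 h b
    simp only [Set.mem_iUnion, Set.mem_compl_iff, Set.mem_ofPred_eq, SetLike.mem_coe] at h3
    simp only [Set.Finite.mem_toFinset]
    constructor
    · intro hb p hp hbp
      exact h3.1 ⟨p, hp, hbp⟩ hb
    · intro hb
      by_contra hc
      obtain ⟨p, hp, hbp⟩ := h3.2 hc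
      exact hb p hp hbp

theorem exists_primes_allReg [IsNoetherianRing R] (m : Ideal R) (a : R × G) (l : List (R × G)) :
    ∀ J : Ideal R, (∀ p ∈ l ++ [a], p.1 ∈ m) → Reg J (l ++ [a]) →
    ∃ P : Finset (Ideal R), (∀ p ∈ P, p.IsPrime ∧ ¬ m ≤ p) ∧
      (∀ b, (∀ p ∈ P, b ∉ p) → AllReg b J l) := by
  classical
  induction l with
  | nil =>
    intro J hm hr
    obtain ⟨P, h1, h2⟩ := exists_primes_regOn J
    refine ⟨P, fun p hp => ⟨h1 p hp, fun hmp => ?_⟩, fun b hb => (h2 b).2 hb⟩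
    exact (h2 a.1).1 hr.1 p hp (hmp (hm a (by simp)))
  | cons q l ih =>
    intro J hm hr
    obtain ⟨P, h1, h2⟩ := exists_primes_regOn J
    obtain ⟨Q, h3, h4⟩ := ih _ (fun p hp => hm p (by simp at hp ⊢; tauto)) hr.2
    refine ⟨P ∪ Q, fun p hp => ?_, fun b hb => ⟨(h2 b).2 ?_, h4 b ?_⟩⟩
    · rcases Finset.mem_union.1 hp with hp | hp
      · refine ⟨h1 p hp, fun hmp => ?_⟩
        exact (h2 q.1).1 hr.1 p hp (hmp (hm q (by simp)))
      · exact h3 p hp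
    · exact fun p hp => hb p (Finset.mem_union_left _ hp)
    · exact fun p hp => hb p (Finset.mem_union_right _ hp)

variable {k : Type*} [Field k] [Algebra k R] [AddCommGroup G] [DecidableEq G]
  (𝒜 : G → Submodule k R) [GradedAlgebra 𝒜]

/-- Homogeneous prime avoidance. -/
theorem hom_avoid (e : G) (X : Set R) (hX : ∀ x ∈ X, x ∈ 𝒜 e) :
    ∀ (N : ℕ) (P : Finset (Ideal R)), P.card = N →
    (∀ p ∈ P, p.IsPrime ∧ ¬ Ideal.span X ≤ p) →
    ∃ i : ℕ, 0 < i ∧ ∃ b ∈ Ideal.span X, b ∈ 𝒜 (i • e) ∧ ∀ p ∈ P, b ∉ p := by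
  classical
  intro N
  induction N with
  | zero =>
    intro P hP _
    refine ⟨1, one_pos, 0, zero_mem _, zero_mem _, ?_⟩
    rw [Finset.card_eq_zero.1 hP]; simp
  | succ N ih =>
    intro P hPN hP
    by_cases hc : ∃ p ∈ P, ∃ q ∈ P, p ≠ q ∧ ∀ i : ℕ, 0 < i → ∀ u ∈ 𝒜 (i • e), u ∈ p → u ∈ q
    · obtain ⟨p, hp, q, hq, hpq, h⟩ := hc
      obtain ⟨i, hi, b, hb, hbi, hbP⟩ := ih (P.erase p) (by rw [Finset.card_erase_of_mem hp]; omega)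
        (fun r hr => hP r (Finset.mem_of_mem_erase hr))
      refine ⟨i, hi, b, hb, hbi, fun r hr => ?_⟩
      by_cases hrp : r = p
      · subst hrp
        intro hbr
        exact hbP q (Finset.mem_erase.2 ⟨hpq.symm, hq⟩) (h i hi b hbi hbr)
      · exact hbP r (Finset.mem_erase.2 ⟨hrp, hr⟩)
    · push Not at hc
      obtain ⟨q, hq⟩ : P.Nonempty := by
        rw [← Finset.card_pos]; omega
      obtain ⟨i, hi, b, hb, hbi, hbP⟩ := ih (P.erase q) (by rw [Finset.card_erase_of_mem hq]; omega)
        (fun r hr => hP r (Finset.mem_of_mem_erase hr))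
      by_cases hbq : b ∈ q
      swap
      · refine ⟨i, hi, b, hb, hbi, fun r hr => ?_⟩
        by_cases hrq : r = q
        · rw [hrq]; exact hbq
        · exact hbP r (Finset.mem_erase.2 ⟨hrq, hr⟩)
      have hqp : q.IsPrime := (hP q hq).1
      obtain ⟨x, hxX, hxq⟩ : ∃ x ∈ X, x ∉ q := by
        by_contra hcon
        push Not at hcon
        exact (hP q hq).2 (Ideal.span_le.2 hcon)
      -- product of forms
      have key : ∀ Q : Finset (Ideal R), Q ⊆ P.erase q → ∃ j : ℕ, 0 < j ∧ ∃ c ∈ Ideal.span X,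
          c ∈ 𝒜 (j • e) ∧ c ∉ q ∧ ∀ p ∈ Q, c ∈ p := by
        intro Q
        induction Q using Finset.induction_on with
        | empty =>
          intro _
          exact ⟨1, one_pos, x, Ideal.subset_span hxX, by simpa using hX x hxX, hxq, by simp⟩
        | insert p Q _ ihQ =>
          intro hQ
          obtain ⟨j, hj, c, hc1, hc2, hc3, hc4⟩ :=
            ihQ (fun r hr => hQ (Finset.mem_insert_of_mem hr))
          have hp := Finset.mem_erase.1 (hQ (Finset.mem_insert_self p Q))
          obtain ⟨j', hj', u, hu, hup, huq⟩ := hc p hp.2 q hq hp.1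
          refine ⟨j + j', by omega, c * u, Ideal.mul_mem_right _ _ hc1, ?_, ?_, ?_⟩
          · rw [add_smul]; exact SetLike.mul_mem_graded hc2 hu
          · intro hcu
            exact (hqp.mem_or_mem hcu).elim hc3 huq
          · intro r hr
            rcases Finset.mem_insert.1 hr with rfl | hr
            · exact Ideal.mul_mem_left _ _ hup
            · exact Ideal.mul_mem_right _ _ (hc4 r hr)
      obtain ⟨j, hj, c, hc1, hc2, hc3, hc4⟩ := key _ subset_rfl
      refine ⟨j * i, Nat.mul_pos hj hi, b ^ j + c ^ i, ?_, ?_, ?_⟩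
      · exact Ideal.add_mem _ (Ideal.pow_mem_of_mem _ hb _ hj) (Ideal.pow_mem_of_mem _ hc1 _ hi)
      · refine Submodule.add_mem _ ?_ ?_
        · rw [mul_smul]; exact SetLike.pow_mem_graded j hbi
        · rw [mul_comm, mul_smul]; exact SetLike.pow_mem_graded i hc2
      · intro r hr
        by_cases hrq : r = q
        · rw [hrq]
          intro hmem
          have h1 : b ^ j ∈ q := Ideal.pow_mem_of_mem _ hbq _ hj
          exact hc3 (hqp.mem_of_pow_mem _ ((Ideal.add_mem_iff_right _ h1).1 hmem))
        · have hr' := Finset.mem_erase.2 ⟨hrq, hr⟩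
          have hrp : r.IsPrime := (hP r hr).1
          intro hmem
          have h1 : c ^ i ∈ r := Ideal.pow_mem_of_mem _ (hc4 r hr') _ hi
          exact hbP r hr' (hrp.mem_of_pow_mem _ ((Ideal.add_mem_iff_left _ h1).1 hmem))

open DirectSum in
/-- Homogeneous ideals. -/
def Hg (J : Ideal R) : Prop := ∀ u ∈ J, ∀ g, (decompose 𝒜 u g : R) ∈ J

theorem decompose_mul_right' {a b : R} {p : G} (hb : b ∈ 𝒜 p) (g : G) :
    (DirectSum.decompose 𝒜 (a * b) g : R) = DirectSum.decompose 𝒜 a (g - p) * b := by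
  have := DirectSum.coe_decompose_mul_add_of_right_mem 𝒜 (a := a) (i := g - p) hb
  rwa [sub_add_cancel] at this

theorem Hg.sup_span {J : Ideal R} (hJ : Hg 𝒜 J) {a : R} {p : G} (ha : a ∈ 𝒜 p) :
    Hg 𝒜 (J ⊔ Ideal.span {a}) := by
  intro u hu g
  obtain ⟨j, hj, y, hy, rfl⟩ := Submodule.mem_sup.1 hu
  obtain ⟨s, rfl⟩ := Ideal.mem_span_singleton'.1 hy
  rw [DirectSum.decompose_add, DirectSum.add_apply, Submodule.coe_add, decompose_mul_right' 𝒜 ha]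
  exact Submodule.add_mem_sup (hJ j hj g) (Ideal.mem_span_singleton'.2 ⟨_, rfl⟩)

theorem Hg.addL (l : List (R × G)) : ∀ {J : Ideal R}, Hg 𝒜 J → (∀ p ∈ l, p.1 ∈ 𝒜 p.2) →
    Hg 𝒜 (addL J l) := by
  induction l with
  | nil => intro J hJ _; exact hJ
  | cons p l ih =>
    intro J hJ h
    exact ih (hJ.sup_span 𝒜 (h p (by simp))) (fun q hq => h q (by simp [hq]))

/-- A graded correspondence (of degree `g`) between `(J₁ : m)/J₁` and `(J₂ : m)/J₂`. -/
structure Link (m J₁ J₂ : Ideal R) (g : G) where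
  Γ : Submodule R (R × R)
  iff_mem : ∀ u v, (u, v) ∈ Γ → (u ∈ J₁ ↔ v ∈ J₂)
  left_mem : ∀ u v, (u, v) ∈ Γ → ∀ c ∈ m, c * u ∈ J₁
  right_mem : ∀ u v, (u, v) ∈ Γ → ∀ c ∈ m, c * v ∈ J₂
  left_ex : ∀ u, (∀ c ∈ m, c * u ∈ J₁) → ∃ v, (u, v) ∈ Γ
  right_ex : ∀ v, (∀ c ∈ m, c * v ∈ J₂) → ∃ u, (u, v) ∈ Γ
  left_hom : ∀ p, ∀ u ∈ 𝒜 p, (∀ c ∈ m, c * u ∈ J₁) → ∃ v ∈ 𝒜 (p + g), (u, v) ∈ Γ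
  right_hom : ∀ p, ∀ v ∈ 𝒜 p, (∀ c ∈ m, c * v ∈ J₂) → ∃ u ∈ 𝒜 (p - g), (u, v) ∈ Γ

def Link.symm {m J₁ J₂ : Ideal R} {g : G} (L : Link 𝒜 m J₁ J₂ g) : Link 𝒜 m J₂ J₁ (-g) where
  Γ := L.Γ.comap (LinearEquiv.prodComm R R R).toLinearMap
  iff_mem := fun u v h => (L.iff_mem v u h).symm
  left_mem := fun u v h => L.right_mem v u h
  right_mem := fun u v h => L.left_mem v u h
  left_ex := fun u h => L.right_ex u h
  right_ex := fun u h => L.left_ex u h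
  left_hom := fun p u hu h => by rw [← sub_eq_add_neg]; exact L.right_hom p u hu h
  right_hom := fun p u hu h => by rw [sub_neg_eq_add]; exact L.left_hom p u hu h

def Link.trans {m J₁ J₂ J₃ : Ideal R} {g g' : G} (L : Link 𝒜 m J₁ J₂ g) (L' : Link 𝒜 m J₂ J₃ g') :
    Link 𝒜 m J₁ J₃ (g + g') where
  Γ := 
    { carrier := {x | ∃ v, (x.1, v) ∈ L.Γ ∧ (v, x.2) ∈ L'.Γ}
      add_mem' := by
        rintro ⟨a, b⟩ ⟨a', b'⟩ ⟨v, h1, h2⟩ ⟨v', h1', h2'⟩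
        exact ⟨v + v', L.Γ.add_mem h1 h1', L'.Γ.add_mem h2 h2'⟩
      zero_mem' := ⟨0, L.Γ.zero_mem, L'.Γ.zero_mem⟩
      smul_mem' := by
        rintro c ⟨a, b⟩ ⟨v, h1, h2⟩
        exact ⟨c • v, L.Γ.smul_mem c h1, L'.Γ.smul_mem c h2⟩ }
  iff_mem := fun u v ⟨w, h1, h2⟩ => (L.iff_mem _ _ h1).trans (L'.iff_mem _ _ h2)
  left_mem := fun u v ⟨w, h1, h2⟩ => L.left_mem _ _ h1
  right_mem := fun u v ⟨w, h1, h2⟩ => L'.right_mem _ _ h2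
  left_ex := fun u h => by
    obtain ⟨v, hv⟩ := L.left_ex u h
    obtain ⟨w, hw⟩ := L'.left_ex v (L.right_mem _ _ hv)
    exact ⟨w, v, hv, hw⟩
  right_ex := fun u h => by
    obtain ⟨v, hv⟩ := L'.right_ex u h
    obtain ⟨w, hw⟩ := L.right_ex v (L'.left_mem _ _ hv)
    exact ⟨w, v, hw, hv⟩
  left_hom := fun p u hu h => by
    obtain ⟨v, hv', hv⟩ := L.left_hom p u hu h
    obtain ⟨w, hw', hw⟩ := L'.left_hom _ v hv' (L.right_mem _ _ hv)
    exact ⟨w, by rwa [← add_assoc], v, hv, hw⟩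
  right_hom := fun p u hu h => by
    obtain ⟨v, hv', hv⟩ := L'.right_hom p u hu h
    obtain ⟨w, hw', hw⟩ := L.right_hom _ v hv' (L'.left_mem _ _ hv)
    exact ⟨w, by rwa [add_comm g, ← sub_sub], v, hw, hv⟩

theorem mem_sup_span {J : Ideal R} {a u : R} :
    u ∈ J ⊔ Ideal.span {a} ↔ ∃ r, u - a * r ∈ J := by
  constructor
  · intro h
    obtain ⟨j, hj, y, hy, rfl⟩ := Submodule.mem_sup.1 h
    obtain ⟨s, rfl⟩ := Ideal.mem_span_singleton'.1 hy
    exact ⟨s, by ring_nf; exact hj⟩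
  · rintro ⟨r, hr⟩
    have : u = (u - a * r) + r * a := by ring
    rw [this]
    exact Submodule.add_mem_sup hr (Ideal.mem_span_singleton'.2 ⟨_, rfl⟩)

theorem exch_iff {J : Ideal R} {a b u v : R} (ha : RegOn J a) (h : b * u - a * v ∈ J)
    (hu : u ∈ J ⊔ Ideal.span {a}) : v ∈ J ⊔ Ideal.span {b} := by
  obtain ⟨r, hr⟩ := mem_sup_span.1 hu
  refine mem_sup_span.2 ⟨r, ha _ ?_⟩
  have : a * (v - b * r) = b * (u - a * r) - (b * u - a * v) := by ring
  rw [this]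
  exact J.sub_mem (J.mul_mem_left _ hr) h

theorem exch_soc {m J : Ideal R} {a b u v : R} (ha : RegOn J a) (h : b * u - a * v ∈ J)
    (hu : ∀ c ∈ m, c * u ∈ J ⊔ Ideal.span {a}) : ∀ c ∈ m, c * v ∈ J ⊔ Ideal.span {b} := by
  intro c hc
  refine exch_iff ha ?_ (hu c hc)
  have : b * (c * u) - a * (c * v) = c * (b * u - a * v) := by ring
  rw [this]
  exact J.mul_mem_left _ h

theorem exch_hom {m J : Ideal R} (hJ : Hg 𝒜 J) {a b u : R} {p q g : G} (ha : a ∈ 𝒜 p)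
    (hb : b ∈ 𝒜 q) (hbm : b ∈ m) (hug : u ∈ 𝒜 g) (hu : ∀ c ∈ m, c * u ∈ J ⊔ Ideal.span {a}) :
    ∃ v ∈ 𝒜 (q + g - p), b * u - a * v ∈ J := by
  obtain ⟨v, hv⟩ := mem_sup_span.1 (hu b hbm)
  refine ⟨DirectSum.decompose 𝒜 v (q + g - p), SetLike.coe_mem _, ?_⟩
  have := hJ _ hv (q + g)
  rwa [DirectSum.decompose_sub, DirectSum.sub_apply, Submodule.coe_sub, mul_comm a,
    decompose_mul_right' 𝒜 ha, DirectSum.decompose_of_mem_same 𝒜 (SetLike.mul_mem_graded hb hug),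
    mul_comm _ a] at this

def Link.exch {m J : Ideal R} (hJ : Hg 𝒜 J) {a b : R} {p q : G} (ha : a ∈ 𝒜 p)
    (hb : b ∈ 𝒜 q) (ham : a ∈ m) (hbm : b ∈ m) (har : RegOn J a) (hbr : RegOn J b) :
    Link 𝒜 m (J ⊔ Ideal.span {a}) (J ⊔ Ideal.span {b}) (q - p) where
  Γ :=
    { carrier := {x | (∀ c ∈ m, c * x.1 ∈ J ⊔ Ideal.span {a}) ∧ b * x.1 - a * x.2 ∈ J}
      add_mem' := by
        rintro ⟨u, v⟩ ⟨u', v'⟩ ⟨h1, h2⟩ ⟨h1', h2'⟩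
        refine ⟨fun c hc => ?_, ?_⟩
        · have := Ideal.add_mem _ (h1 c hc) (h1' c hc)
          rwa [← mul_add] at this
        · have := Ideal.add_mem _ h2 h2'
          have e : b * (u + u') - a * (v + v') = (b * u - a * v) + (b * u' - a * v') := by ring
          simp only [Prod.fst_add, Prod.snd_add]
          rwa [e]
      zero_mem' := by simp
      smul_mem' := by
        rintro r ⟨u, v⟩ ⟨h1, h2⟩
        refine ⟨fun c hc => ?_, ?_⟩
        · have := Ideal.mul_mem_left _ r (h1 c hc)
          have e : c * (r * u) = r * (c * u) := by ring
          simp only [Prod.smul_fst, smul_eq_mul]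
          rwa [e]
        · have := Ideal.mul_mem_left _ r h2
          have e : b * (r * u) - a * (r * v) = r * (b * u - a * v) := by ring
          simp only [Prod.smul_fst, Prod.smul_snd, smul_eq_mul]
          rwa [e] }
  iff_mem := fun u v ⟨h1, h2⟩ => ⟨exch_iff har h2, exch_iff hbr (by
    have := J.neg_mem h2; rwa [neg_sub] at this)⟩
  left_mem := fun u v h => h.1
  right_mem := fun u v h => exch_soc har h.2 h.1
  left_ex := fun u h => by
    obtain ⟨v, hv⟩ := mem_sup_span.1 (h b hbm)
    exact ⟨v, h, hv⟩
  right_ex := fun v h => by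
    obtain ⟨u, hu⟩ := mem_sup_span.1 (h a ham)
    exact ⟨u, exch_soc hbr hu h, by have := J.neg_mem hu; rwa [neg_sub] at this⟩
  left_hom := fun g u hug h => by
    obtain ⟨v, hv, hv'⟩ := exch_hom 𝒜 hJ ha hb hbm hug h
    exact ⟨v, by convert hv using 2; abel, h, hv'⟩
  right_hom := fun g v hvg h => by
    obtain ⟨u, hu, hu'⟩ := exch_hom 𝒜 hJ hb ha ham hvg h
    exact ⟨u, by convert hu using 2; abel, exch_soc hbr hu' h,
      by have := J.neg_mem hu'; rwa [neg_sub] at this⟩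

def Link.refl (m J : Ideal R) : Link 𝒜 m J J 0 where
  Γ :=
    { carrier := {x | (∀ c ∈ m, c * x.1 ∈ J) ∧ x.1 = x.2}
      add_mem' := by
        rintro ⟨u, v⟩ ⟨u', v'⟩ ⟨h1, h2⟩ ⟨h1', h2'⟩
        refine ⟨fun c hc => ?_, ?_⟩
        · have := Ideal.add_mem _ (h1 c hc) (h1' c hc)
          rwa [← mul_add] at this
        · simp_all
      zero_mem' := by simp
      smul_mem' := by
        rintro r ⟨u, v⟩ ⟨h1, h2⟩
        refine ⟨fun c hc => ?_, ?_⟩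
        · have := Ideal.mul_mem_left _ r (h1 c hc)
          have e : c * (r * u) = r * (c * u) := by ring
          simp only [Prod.smul_fst, smul_eq_mul]
          rwa [e]
        · simp_all }
  iff_mem := fun u v h => by rw [show u = v from h.2]
  left_mem := fun u v h => h.1
  right_mem := fun u v h => by rw [← show u = v from h.2]; exact h.1
  left_ex := fun u h => ⟨u, h, rfl⟩
  right_ex := fun u h => ⟨u, h, rfl⟩
  left_hom := fun g u hu h => ⟨u, by simpa using hu, h, rfl⟩
  right_hom := fun g u hu h => ⟨u, by simpa using hu, h, rfl⟩

def Link.cast {m J₁ J₂ J₁' J₂' : Ideal R} {g g' : G} (L : Link 𝒜 m J₁ J₂ g) (h1 : J₁ = J₁')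
    (h2 : J₂ = J₂') (h3 : g = g') : Link 𝒜 m J₁' J₂' g' := by
  subst h1 h2 h3; exact L

/-- Total degree of a list. -/
def tdeg (l : List (R × G)) : G := (l.map Prod.snd).sum

theorem main_link [IsNoetherianRing R] (e : G) (X : Set R) (hX : ∀ x ∈ X, x ∈ 𝒜 e) :
    ∀ (N : ℕ) (J : Ideal R) (la lc : List (R × G)), Hg 𝒜 J → la.length = N → lc.length = N →
    (∀ p ∈ la, p.1 ∈ 𝒜 p.2 ∧ p.1 ∈ Ideal.span X) → (∀ p ∈ lc, p.1 ∈ 𝒜 p.2 ∧ p.1 ∈ Ideal.span X) →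
    Reg J la → Reg J lc → 
    Nonempty (Link 𝒜 (Ideal.span X) (addL J la) (addL J lc) (tdeg lc - tdeg la)) := by
  classical
  intro N
  induction N with
  | zero =>
    intro J la lc hJ h1 h2 _ _ _ _
    rw [List.length_eq_zero_iff] at h1 h2
    subst h1 h2
    exact ⟨(Link.refl 𝒜 _ _).cast 𝒜 rfl rfl (by simp)⟩
  | succ N ih =>
    intro J la lc hJ h1 h2 hla hlc hra hrc
    obtain ⟨l1, a, rfl⟩ : ∃ l a, la = l ++ [a] :=
      ⟨la.dropLast, la.getLast (by rintro rfl; simp at h1), (List.dropLast_append_getLast _).symm⟩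
    obtain ⟨l2, c, rfl⟩ : ∃ l a, lc = l ++ [a] :=
      ⟨lc.dropLast, lc.getLast (by rintro rfl; simp at h2), (List.dropLast_append_getLast _).symm⟩
    obtain ⟨P, hP, hP'⟩ := exists_primes_allReg _ a l1 J (fun p hp => (hla p hp).2) hra
    obtain ⟨Q, hQ, hQ'⟩ := exists_primes_allReg _ c l2 J (fun p hp => (hlc p hp).2) hrc
    obtain ⟨i, -, b, hbm, hbi, hb⟩ := hom_avoid 𝒜 e X hX _ (P ∪ Q) rfl (fun p hp =>
      (Finset.mem_union.1 hp).elim (hP p) (hQ p))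
    have hb1 := hP' b (fun p hp => hb p (Finset.mem_union_left _ hp))
    have hb2 := hQ' b (fun p hp => hb p (Finset.mem_union_right _ hp))
    rw [reg_append_singleton] at hra hrc
    have hla1 : ∀ p ∈ l1, p.1 ∈ 𝒜 p.2 ∧ p.1 ∈ Ideal.span X := fun p hp => hla p (by simp [hp])
    have hlc1 : ∀ p ∈ l2, p.1 ∈ 𝒜 p.2 ∧ p.1 ∈ Ideal.span X := fun p hp => hlc p (by simp [hp])
    obtain ⟨ha, ham⟩ := hla a (by simp)
    obtain ⟨hc, hcm⟩ := hlc c (by simp)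
    obtain ⟨L⟩ := ih (J ⊔ Ideal.span {b}) l1 l2 (hJ.sup_span 𝒜 hbi) (by simpa using h1)
      (by simpa using h2) hla1 hlc1 (hb1.reg hra.1) (hb2.reg hrc.1)
    have La := Link.exch 𝒜 (hJ.addL 𝒜 l1 (fun p hp => (hla1 p hp).1)) ha hbi ham hbm hra.2 hb1.last
    have Lc := Link.exch 𝒜 (hJ.addL 𝒜 l2 (fun p hp => (hlc1 p hp).1)) hbi hc hbm hcm hb2.last hrc.2
    refine ⟨((La.trans 𝒜 (L.cast 𝒜 (addL_sup _ _ _) (addL_sup _ _ _) rfl)).trans 𝒜 Lc).cast 𝒜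
      (addL_append_singleton _ _ _).symm (addL_append_singleton _ _ _).symm ?_⟩
    simp only [tdeg, List.map_append, List.sum_append, List.map_cons, List.map_nil,
      List.sum_cons, List.sum_nil]
    abel

/-- Socle generator. -/
theorem socle_gen [IsNoetherianRing R] (e : G) (X : Set R) (hX : ∀ x ∈ X, x ∈ 𝒜 e)
    (la lc : List (R × G)) (hlen : la.length = lc.length)
    (hla : ∀ p ∈ la, p.1 ∈ 𝒜 p.2 ∧ p.1 ∈ Ideal.span X)
    (hlc : ∀ p ∈ lc, p.1 ∈ 𝒜 p.2 ∧ p.1 ∈ Ideal.span X) (hra : Reg ⊥ la) (hrc : Reg ⊥ lc)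
    (hm : addL ⊥ lc = Ideal.span X) :
    ∃ s ∈ 𝒜 (tdeg la - tdeg lc), (∀ r, r * s ∈ addL ⊥ la ↔ r ∈ Ideal.span X) ∧
      ∀ u, (∀ c ∈ Ideal.span X, c * u ∈ addL ⊥ la) → ∃ r, u - r * s ∈ addL ⊥ la := by
  obtain ⟨L⟩ := main_link 𝒜 e X hX _ ⊥ la lc (by
    intro u hu g
    rw [Ideal.mem_bot] at hu
    simp [hu]) hlen rfl hla hlc hra hrc
  rw [hm] at L
  obtain ⟨s, hs, hsΓ⟩ := L.right_hom 0 1 SetLike.GradedOne.one_mem (by simp)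
  have hr : ∀ r, (r * s, r) ∈ L.Γ := fun r => by
    have := L.Γ.smul_mem r hsΓ
    simpa using this
  refine ⟨s, by simpa using hs, fun r => L.iff_mem _ _ (hr r), fun u hu => ?_⟩
  obtain ⟨v, hv⟩ := L.left_ex u hu
  refine ⟨v, (L.iff_mem _ 0 ?_).2 (zero_mem _)⟩
  have := L.Γ.sub_mem hv (hr v)
  simpa using this

end Generic

end Stmt3Core
open MvPolynomial

noncomputable section

namespace Stmt3

variable (k : Type) [Field k] (d n : ℕ)

/-- `B = R ⊗_k T = k[x_1,…,x_d,y_1,…,y_n]`. -/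
abbrev B := MvPolynomial (Fin d ⊕ Fin n) k

/-- `T = k[y_1,…,y_n]`. -/
abbrev T := MvPolynomial (Fin n) k

/-- `B` is a `T`-algebra via `y_j ↦ y_j`. -/
instance : Algebra (T k n) (B k d n) :=
  ((rename Sum.inr : T k n →ₐ[k] B k d n).toRingHom).toAlgebra

/-- The bigrading weight: `bideg x_i = (1,0)`, `bideg y_j = (0,1)`. -/
def bwt : (Fin d ⊕ Fin n) → ℕ × ℕ := Sum.elim (fun _ => (1, 0)) (fun _ => (0, 1))

/-- The `x`-degree weight. -/
def wx : (Fin d ⊕ Fin n) → ℕ := Sum.elim (fun _ => 1) (fun _ => 0)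

/-- The ideal `m = (x_1,…,x_d)B`. -/
def mxB : Ideal (B k d n) := Ideal.span (Set.range fun i : Fin d => (X (Sum.inl i) : B k d n))

variable (I : Ideal (B k d n))

/-- `A = H⁰_m(S)`: elements of `S = B/I` annihilated by a power of `m`. -/
def H0 : Submodule (B k d n) (B k d n ⧸ I) :=
  ⨆ N : ℕ, Submodule.torsionBySet (B k d n) (B k d n ⧸ I)
    ((mxB k d n ^ N : Ideal (B k d n)) : Set (B k d n))

/-- The bigraded component of `S = B/I` in bidegree `p`. -/
def Scomp (p : ℕ × ℕ) : Submodule k (B k d n ⧸ I) :=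
  (weightedHomogeneousSubmodule k (bwt d n) p).map (Ideal.Quotient.mkₐ k I).toLinearMap

/-- The graded strand `S_j = ⊕_b S_{(j,b)}` of `S` in `x`-degree `j`, as a `T`-module. -/
def SxDeg (j : ℕ) : Submodule (T k n) (B k d n ⧸ I) :=
  Submodule.span (T k n) ((Ideal.Quotient.mk I) '' {g : B k d n | g.IsWeightedHomogeneous (wx d n) j})

/-- The graded strand of `S` in (possibly negative) `x`-degree `i : ℤ`. -/
def SxDegZ (i : ℤ) : Submodule (T k n) (B k d n ⧸ I) :=
  if 0 ≤ i then SxDeg k d n I i.toNat else ⊥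

/-- The graded strand `A_i = ⊕_b A_{(i,b)}` of `A = H⁰_m(S)`, as a `T`-module. -/
def AcompZ (i : ℤ) : Submodule (T k n) (B k d n ⧸ I) :=
  (H0 k d n I).restrictScalars (T k n) ⊓ SxDegZ k d n I i

/-- The graded component of `T` in (possibly negative) degree `j`. -/
def TcompZ (j : ℤ) : Submodule k (T k n) :=
  if 0 ≤ j then homogeneousSubmodule (Fin n) k j.toNat else ⊥

/-! ### Concrete part -/

section Concrete

open Stmt3Core

/-- The bigrading weight with values in `ℤ × ℤ`. -/
def wz : (Fin d ⊕ Fin n) → ℤ × ℤ := Sum.elim (fun _ => (1, 0)) (fun _ => (0, 1))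

/-- The `x`-weight with values in `ℤ`. -/
def wxz : (Fin d ⊕ Fin n) → ℤ := Sum.elim (fun _ => 1) (fun _ => 0)

theorem weight_comp' {σ M N : Type*} [AddCommMonoid M] [AddCommMonoid N] (w : σ → M) (g : M →+ N)
    (c : σ →₀ ℕ) : Finsupp.weight (fun i => g (w i)) c = g (Finsupp.weight w c) := by
  simp [Finsupp.weight_apply, Finsupp.sum, map_sum]

theorem hom_comp {σ M N : Type*} [AddCommMonoid M] [AddCommMonoid N] (w : σ → M) (g : M →+ N)
    (w' : σ → N) (hw : ∀ i, w' i = g (w i)) {φ : MvPolynomial σ k} {p : M} 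
    (h : φ.IsWeightedHomogeneous w p) : φ.IsWeightedHomogeneous w' (g p) := by
  intro c hc
  obtain rfl : w' = fun i => g (w i) := funext hw
  rw [weight_comp', h hc]

theorem hom_of_comp {σ M N : Type*} [AddCommMonoid M] [AddCommMonoid N] (w : σ → M) (g : M →+ N)
    (hg : Function.Injective g)
    (w' : σ → N) (hw : ∀ i, w' i = g (w i)) {φ : MvPolynomial σ k} {p : M} 
    (h : φ.IsWeightedHomogeneous w' (g p)) : φ.IsWeightedHomogeneous w p := by
  intro c hc
  obtain rfl : w' = fun i => g (w i) := funext hw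
  have := h hc
  rw [weight_comp'] at this
  exact hg this

def castZ2 : ℕ × ℕ →+ ℤ × ℤ := (Nat.castAddMonoidHom ℤ).prodMap (Nat.castAddMonoidHom ℤ)

theorem bwt_iff {φ : B k d n} {a b : ℕ} : φ.IsWeightedHomogeneous (bwt d n) (a, b) ↔
    φ.IsWeightedHomogeneous (wz d n) ((a : ℤ), (b : ℤ)) := by
  have hw : ∀ i, wz d n i = castZ2 (bwt d n i) := by
    rintro (i | i) <;> simp [wz, bwt, castZ2]
  constructor
  · intro h
    exact hom_comp k (bwt d n) castZ2 (wz d n) hw h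
  · intro h
    refine hom_of_comp k (bwt d n) castZ2 ?_ (wz d n) hw h
    rintro ⟨a, b⟩ ⟨a', b'⟩ h
    simpa [castZ2] using h

theorem wx_iff {φ : B k d n} {a : ℕ} : φ.IsWeightedHomogeneous (wx d n) a ↔
    φ.IsWeightedHomogeneous (wxz d n) (a : ℤ) := by
  have hw : ∀ i, wxz d n i = Nat.castAddMonoidHom ℤ (wx d n i) := by
    rintro (i | i) <;> simp [wx, wxz]
  exact ⟨fun h => hom_comp k (wx d n) (Nat.castAddMonoidHom ℤ) _ hw h,
    fun h => hom_of_comp k (wx d n) (Nat.castAddMonoidHom ℤ) Nat.cast_injective _ hw h⟩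

theorem wz_wxz {φ : B k d n} {p : ℤ × ℤ} (h : φ.IsWeightedHomogeneous (wz d n) p) :
    φ.IsWeightedHomogeneous (wxz d n) p.1 := by
  refine hom_comp k (wz d n) (AddMonoidHom.fst ℤ ℤ) _ ?_ h
  rintro (i | i) <;> simp [wz, wxz]

theorem mem_mxB {r : B k d n} : r ∈ mxB k d n ↔ ∀ c ∈ r.support, ∃ i, c (Sum.inl i) ≠ 0 := by
  have : mxB k d n = Ideal.span (X '' (Set.range (Sum.inl : Fin d → Fin d ⊕ Fin n))) := by
    rw [mxB, ← Set.range_comp]; rfl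
  rw [this, mem_ideal_span_X_image]
  simp

theorem addL_eq {R G : Type*} [CommRing R] (l : List (R × G)) : ∀ J : Ideal R,
    addL J l = J ⊔ Ideal.ofList (l.map Prod.fst) := by
  induction l with
  | nil => intro J; simp [addL]
  | cons p l ih =>
    intro J
    simp only [addL, ih, List.map_cons, Ideal.ofList_cons, sup_assoc]

theorem reg_of {R G : Type*} [CommRing R] (l : List (R × G)) : ∀ J : Ideal R,
    (∀ i (h : i < l.length), RegOn (J ⊔ Ideal.ofList ((l.map Prod.fst).take i)) (l[i]).1) →
    Reg J l := by
  induction l with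
  | nil => intro J _; trivial
  | cons p l ih =>
    intro J h
    refine ⟨by have := h 0 (by simp); simp only [List.take_zero, Ideal.ofList_nil, sup_bot_eq] at this; exact this, ih _ fun i hi => ?_⟩
    have := h (i + 1) (by simpa using hi)
    simpa [Ideal.ofList_cons, sup_assoc] using this

theorem ofList_ofFn {R : Type*} [CommRing R] {d : ℕ} (f : Fin d → R) :
    Ideal.ofList (List.ofFn f) = Ideal.span (Set.range f) := by
  unfold Ideal.ofList
  congr 1
  ext x
  simp

theorem regOn_of {R : Type*} [CommRing R] (J : Ideal R) (b : R) (h : IsSMulRegular (R ⧸ J) b) :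
    RegOn J b := by
  rw [isSMulRegular_iff_right_eq_zero_of_smul] at h
  intro r hr
  have := h (Submodule.Quotient.mk r) (by
    rw [← Submodule.Quotient.mk_smul, Submodule.Quotient.mk_eq_zero]; exact hr)
  rwa [Submodule.Quotient.mk_eq_zero] at this

theorem reg_X : Reg (⊥ : Ideal (B k d n))
    (List.ofFn fun i : Fin d => ((X (Sum.inl i) : B k d n), ((1, 0) : ℤ × ℤ))) := by
  apply reg_of
  intro i hi r hr
  simp only [List.length_ofFn] at hi
  simp only [bot_sup_eq, List.getElem_ofFn] at hr ⊢
  have hJ : Ideal.ofList (List.take i (List.map Prod.fst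
      (List.ofFn fun i : Fin d => ((X (Sum.inl i) : B k d n), ((1, 0) : ℤ × ℤ))))) =
      Ideal.span (X '' {j : Fin d ⊕ Fin n | ∃ l : Fin d, l.1 < i ∧ j = Sum.inl l}) := by
    unfold Ideal.ofList
    congr 1
    ext x
    simp only [List.map_ofFn, Set.mem_image, Set.mem_ofPred_eq]
    constructor
    · intro hx
      obtain ⟨l, hl, rfl⟩ := List.mem_iff_getElem.1 hx
      simp only [List.length_take, List.length_ofFn, lt_inf_iff] at hl
      exact ⟨Sum.inl ⟨l, hl.2⟩, ⟨⟨l, hl.2⟩, hl.1, rfl⟩, by simp⟩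
    · rintro ⟨_, ⟨l, hl, rfl⟩, rfl⟩
      refine List.mem_iff_getElem.2 ⟨l.1, by simp [hl], by simp⟩
  rw [hJ, mem_ideal_span_X_image] at hr ⊢
  intro c hc
  obtain ⟨j, ⟨l, hl, rfl⟩, h⟩ := hr (Finsupp.single (Sum.inl ⟨i, hi⟩) 1 + c) (by
    rw [mem_support_iff, coeff_X_mul]; exact mem_support_iff.1 hc)
  refine ⟨_, ⟨l, hl, rfl⟩, ?_⟩
  rw [Finsupp.add_apply, Finsupp.single_apply, if_neg, zero_add] at h
  · exact h
  · intro hh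
    simp only [Sum.inl.injEq] at hh
    rw [← hh] at hl
    exact lt_irrefl _ hl

theorem socle_B (f : Fin d → B k d n) (α β : Fin d → ℕ)
    (hfm : ∀ i, f i ∈ mxB k d n)
    (hreg : RingTheory.Sequence.IsRegular (B k d n) (List.ofFn f))
    (hbihom : ∀ i, f i ∈ weightedHomogeneousSubmodule k (bwt d n) (α i, β i))
    (hI : I = Ideal.span (Set.range f))
    (δ τ : ℤ) (hδ : δ = (∑ i, (α i : ℤ)) - d) (hτ : τ = ∑ i, (β i : ℤ)) :
    ∃ s : B k d n, s.IsWeightedHomogeneous (wz d n) (δ, τ) ∧ (∀ r, r * s ∈ I ↔ r ∈ mxB k d n) ∧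
      ∀ u, (∀ c ∈ mxB k d n, c * u ∈ I) → ∃ r, u - r * s ∈ I := by
  let _ := weightedGradedAlgebra k (wz d n)
  have hla : addL (⊥ : Ideal (B k d n))
      (List.ofFn fun i => (f i, ((α i : ℤ), (β i : ℤ)))) = I := by
    rw [addL_eq, List.map_ofFn, ofList_ofFn, bot_sup_eq, hI]; rfl
  have := socle_gen (weightedHomogeneousSubmodule k (wz d n)) (1, 0)
    (Set.range fun i : Fin d => (X (Sum.inl i) : B k d n)) (by
      rintro _ ⟨i, rfl⟩
      exact isWeightedHomogeneous_X k (wz d n) (Sum.inl i))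
    (List.ofFn fun i => (f i, ((α i : ℤ), (β i : ℤ))))
    (List.ofFn fun i => ((X (Sum.inl i) : B k d n), ((1, 0) : ℤ × ℤ))) (by simp)
    (by
      intro p hp
      obtain ⟨i, rfl⟩ := List.mem_ofFn.1 hp
      exact ⟨(bwt_iff k d n).1 (hbihom i), hfm i⟩)
    (by
      intro p hp
      obtain ⟨i, rfl⟩ := List.mem_ofFn.1 hp
      exact ⟨isWeightedHomogeneous_X k (wz d n) (Sum.inl i), Ideal.subset_span ⟨i, rfl⟩⟩)
    (by
      apply reg_of
      intro i hi
      have hh := hreg.toIsWeaklyRegular.regular_mod_prev i (by simpa using hi)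
      apply regOn_of
      rw [List.map_ofFn, bot_sup_eq]
      rw [smul_eq_mul, Ideal.mul_top] at hh
      simp only [List.getElem_ofFn] at hh ⊢
      exact hh)
    (reg_X k d n)
    (by rw [addL_eq, List.map_ofFn, ofList_ofFn, bot_sup_eq]; rfl)
  rw [hla] at this
  obtain ⟨s, hs, h1, h2⟩ := this
  refine ⟨s, ?_, h1, h2⟩
  suffices h : (δ, τ) = tdeg (List.ofFn fun i => (f i, ((α i : ℤ), (β i : ℤ)))) -
      tdeg (List.ofFn fun i : Fin d => ((X (Sum.inl i) : B k d n), ((1, 0) : ℤ × ℤ))) by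
    rw [h]; exact hs
  simp only [tdeg, List.map_ofFn, List.sum_ofFn, Function.comp_def]
  rw [hδ, hτ]
  ext
  · simp [Prod.fst_sum]
  · simp [Prod.snd_sum]

/-- homogeneity of `I` -/
theorem hg_span {σ G : Type*} [AddCommGroup G] [DecidableEq G] (w : σ → G) {ι : Type*}
    (f : ι → MvPolynomial σ k) (p : ι → G) (hf : ∀ i, (f i).IsWeightedHomogeneous w (p i))
    {u : MvPolynomial σ k} (hu : u ∈ Ideal.span (Set.range f)) (g : G) :
    weightedHomogeneousComponent w g u ∈ Ideal.span (Set.range f) := by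
  let _ := weightedGradedAlgebra k w
  have h : (Ideal.span (Set.range f)).IsHomogeneous (weightedHomogeneousSubmodule k w) := by
    apply Ideal.homogeneous_span
    rintro _ ⟨i, rfl⟩
    exact ⟨p i, hf i⟩
  exact (mem_iff_weightedHomogeneousComponent_mem k w h u).1 hu g

theorem comp_mul {σ G : Type*} [AddCommGroup G] [DecidableEq G] (w : σ → G)
    {s : MvPolynomial σ k} {p : G} (hs : s.IsWeightedHomogeneous w p) (r : MvPolynomial σ k) (g : G) :
    weightedHomogeneousComponent w g (r * s) = weightedHomogeneousComponent w (g - p) r * s := by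
  let _ := weightedGradedAlgebra k w
  have := decompose_mul_right' (weightedHomogeneousSubmodule k w) (a := r) (b := s) hs g
  have h2 : ∀ (φ : MvPolynomial σ k) (g : G),
      (DirectSum.decompose (weightedHomogeneousSubmodule k w) φ g : MvPolynomial σ k) =
      weightedHomogeneousComponent w g φ := fun φ g => weightedDecomposition.decompose'_apply k w φ g
  rwa [h2, h2] at this

theorem weight_wxz (c : Fin d ⊕ Fin n →₀ ℕ) (h : ∀ i, c (Sum.inl i) = 0) :
    Finsupp.weight (wxz d n) c = 0 := by
  rw [Finsupp.weight_apply, Finsupp.sum]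
  refine Finset.sum_eq_zero ?_
  rintro (i | i) _ <;> simp [wxz, h]

theorem hom_mem_mxB {r : B k d n} {i : ℤ} (hi : i ≠ 0) (hr : r.IsWeightedHomogeneous (wxz d n) i) :
    r ∈ mxB k d n := by
  rw [mem_mxB]
  intro c hc
  by_contra hcon
  push Not at hcon
  have := hr (mem_support_iff.1 hc)
  rw [weight_wxz d n c hcon] at this
  exact hi this.symm

theorem vanish (f : Fin d → B k d n) (p : Fin d → ℤ)
    (hf : ∀ i, (f i).IsWeightedHomogeneous (wxz d n) (p i)) (hI : I = Ideal.span (Set.range f))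
    {δ : ℤ} {s : B k d n} (hs : s.IsWeightedHomogeneous (wxz d n) δ)
    (h1 : ∀ r, r * s ∈ I ↔ r ∈ mxB k d n)
    (h2 : ∀ u, (∀ c ∈ mxB k d n, c * u ∈ I) → ∃ r, u - r * s ∈ I) (N : ℕ) :
    ∀ (i : ℤ) (u : B k d n), δ < i → u.IsWeightedHomogeneous (wxz d n) i →
      (∀ c ∈ mxB k d n ^ N, c * u ∈ I) → u ∈ I := by
  induction N with
  | zero => 
    intro i u _ _ h
    simpa using h 1 (by simp)
  | succ N ih =>
    intro i u hi hu h
    have hx : ∀ j : Fin d, X (Sum.inl j) * u ∈ I := by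
      intro j
      refine ih (1 + i) _ (by omega) ?_ ?_
      · exact (isWeightedHomogeneous_X k (wxz d n) (Sum.inl j)).mul hu
      · intro c hc
        rw [← mul_assoc]
        apply h
        rw [pow_succ]
        exact Ideal.mul_mem_mul hc (Ideal.subset_span ⟨j, rfl⟩)
    have hm : ∀ c ∈ mxB k d n, c * u ∈ I := by
      intro c hc
      refine Submodule.span_induction (p := fun c _ => c * u ∈ I) ?_ ?_ ?_ ?_ hc
      · rintro _ ⟨j, rfl⟩; exact hx j
      · simp
      · intro a b _ _ ha hb; rw [add_mul]; exact I.add_mem ha hb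
      · intro a b _ hb; rw [smul_eq_mul, mul_assoc]; exact I.mul_mem_left _ hb
    obtain ⟨r, hr⟩ := h2 u hm
    rw [hI] at hr
    have h3 := hg_span k (wxz d n) f p hf hr i
    rw [map_sub, comp_mul k (wxz d n) hs, weightedHomogeneousComponent_of_mem hu, if_pos rfl,
      ← hI] at h3
    have h4 := (h1 (weightedHomogeneousComponent (wxz d n) (i - δ) r)).2
      (hom_mem_mxB k d n (i := i - δ) (by omega)
        (weightedHomogeneousComponent_isWeightedHomogeneous _ _))
    have := I.add_mem h3 h4
    simpa using this

theorem mem_H0 {u : B k d n} : (Ideal.Quotient.mk I u) ∈ H0 k d n I ↔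
    ∃ N, ∀ c ∈ mxB k d n ^ N, c * u ∈ I := by
  unfold H0
  rw [Submodule.mem_iSup_of_directed]
  · refine exists_congr fun N => ?_
    rw [Submodule.mem_torsionBySet_iff]
    constructor
    · intro h c hc
      have := h ⟨c, hc⟩
      rwa [← Ideal.Quotient.eq_zero_iff_mem, map_mul]
    · rintro h ⟨c, hc⟩
      have := h c hc
      rw [← Ideal.Quotient.eq_zero_iff_mem, map_mul] at this
      exact this
  · refine Monotone.directed_le ?_
    intro a b hab
    apply Submodule.torsionBySet_le_torsionBySet_of_subset
    exact Ideal.pow_le_pow_right hab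

theorem alg_hom (t : T k n) : (algebraMap (T k n) (B k d n) t).IsWeightedHomogeneous (wx d n) 0 := by
  show (rename Sum.inr t : B k d n).IsWeightedHomogeneous (wx d n) 0
  induction t using MvPolynomial.induction_on with
  | C a => rw [rename_C]; exact isWeightedHomogeneous_C _ _
  | add p q hp hq => rw [map_add]; exact hp.add hq
  | mul_X p i hp =>
    rw [map_mul, rename_X]
    exact hp.mul (isWeightedHomogeneous_X k (wx d n) (Sum.inr i))

theorem mem_SxDeg {j : ℕ} {x : B k d n ⧸ I} : x ∈ SxDeg k d n I j ↔
    ∃ u : B k d n, u.IsWeightedHomogeneous (wx d n) j ∧ Ideal.Quotient.mk I u = x := by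
  constructor
  · intro h
    refine Submodule.span_induction (p := fun x _ => ∃ u : B k d n,
      u.IsWeightedHomogeneous (wx d n) j ∧ Ideal.Quotient.mk I u = x) ?_ ?_ ?_ ?_ h
    · rintro _ ⟨u, hu, rfl⟩; exact ⟨u, hu, rfl⟩
    · exact ⟨0, isWeightedHomogeneous_zero _ _ _, map_zero _⟩
    · rintro _ _ _ _ ⟨u, hu, rfl⟩ ⟨v, hv, rfl⟩
      exact ⟨u + v, hu.add hv, map_add _ _ _⟩
    · rintro t _ _ ⟨u, hu, rfl⟩
      refine ⟨algebraMap (T k n) (B k d n) t * u, ?_, ?_⟩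
      · have := (alg_hom k d n t).mul hu
        rwa [zero_add] at this
      · rw [← Algebra.smul_def]; rfl
  · rintro ⟨u, hu, rfl⟩
    exact Submodule.subset_span ⟨u, hu, rfl⟩

theorem coeff_alg (t : T k n) (c : Fin n →₀ ℕ) :
    coeff (c.mapDomain Sum.inr) (algebraMap (T k n) (B k d n) t) = coeff c t :=
  coeff_rename_mapDomain _ Sum.inr_injective _ _

theorem mapDomain_inl (c : Fin n →₀ ℕ) (i : Fin d) :
    (c.mapDomain (Sum.inr : Fin n → Fin d ⊕ Fin n)) (Sum.inl i) = 0 :=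
  Finsupp.mapDomain_of_notMem_range _ _ (by simp)

theorem weight_mapDomain (c : Fin n →₀ ℕ) :
    Finsupp.weight (wz d n) (c.mapDomain Sum.inr) = (0, (c.degree : ℤ)) := by
  rw [Finsupp.weight_apply, Finsupp.sum_mapDomain_index (by simp) (by intros; rw [add_smul])]
  rw [Finsupp.sum, Finsupp.degree_apply]
  ext
  · simp [wz, Prod.fst_sum]
  · simp [wz, Prod.snd_sum]

theorem alg_mem_mxB (t : T k n) (h : algebraMap (T k n) (B k d n) t ∈ mxB k d n) : t = 0 := by
  rw [mem_mxB] at h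
  ext c
  by_contra hc
  obtain ⟨i, hi⟩ := h (c.mapDomain Sum.inr) (by rw [mem_support_iff, coeff_alg]; exact hc)
  exact hi (mapDomain_inl d n c i)

theorem exists_T (r : B k d n) : ∃ t : T k n, r - algebraMap (T k n) (B k d n) t ∈ mxB k d n := by
  induction r using MvPolynomial.induction_on with
  | C a =>
    refine ⟨C a, ?_⟩
    have : algebraMap (T k n) (B k d n) (C a) = C a := rename_C _ _
    rw [this]; simp
  | add p q hp hq =>
    obtain ⟨t, ht⟩ := hp
    obtain ⟨t', ht'⟩ := hq
    refine ⟨t + t', ?_⟩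
    have := Ideal.add_mem _ ht ht'
    rw [map_add]
    convert this using 1
    ring
  | mul_X p i hp =>
    obtain ⟨t, ht⟩ := hp
    rcases i with i | i
    · refine ⟨0, ?_⟩
      rw [map_zero, sub_zero]
      exact Ideal.mul_mem_left _ _ (Ideal.subset_span ⟨i, rfl⟩)
    · refine ⟨t * X i, ?_⟩
      have h2 : algebraMap (T k n) (B k d n) (X i) = X (Sum.inr i) := rename_X _ _
      rw [map_mul, h2, ← sub_mul]
      exact Ideal.mul_mem_right _ _ ht

theorem mem_TcompZ {t : T k n} {j : ℤ} : t ∈ TcompZ k n j ↔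
    ∀ c, coeff c t ≠ 0 → (c.degree : ℤ) = j := by
  unfold TcompZ
  split_ifs with h
  · rw [mem_homogeneousSubmodule, IsHomogeneous, IsWeightedHomogeneous]
    refine forall_congr' fun c => imp_congr_right fun _ => ?_
    have : Finsupp.weight (1 : Fin n → ℕ) c = c.degree := by
      rw [Finsupp.degree_eq_weight_one]; rfl
    rw [this]
    omega
  · rw [Submodule.mem_bot]
    constructor
    · rintro rfl; simp
    · intro hh
      ext c
      by_contra hc
      have := hh c hc
      omega

theorem alg_hom_wz {t : T k n} {j : ℤ} (h : t ∈ TcompZ k n j) :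
    (algebraMap (T k n) (B k d n) t).IsWeightedHomogeneous (wz d n) (0, j) := by
  rw [mem_TcompZ] at h
  intro c hc
  obtain ⟨c', rfl, hc'⟩ := coeff_rename_ne_zero _ _ _ hc
  rw [weight_mapDomain, h c' hc']

end Concrete
/-- `A_i = 0` for `i < 0` and for `i > δ`, and there is a graded
isomorphism of `T`-modules `A_δ ≅ T(−τ)`: a `T`-linear isomorphism identifying, for each
internal degree `b`, the component `A_{(δ,b)}` with the homogeneous component
`T(−τ)_b = T_{b−τ}`. -/
theorem strand_vanishing_and_top
    (f : Fin d → B k d n) (α β : Fin d → ℕ)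
    (hfm : ∀ i, f i ∈ mxB k d n)
    (hreg : RingTheory.Sequence.IsRegular (B k d n) (List.ofFn f))
    (hbihom : ∀ i, f i ∈ weightedHomogeneousSubmodule k (bwt d n) (α i, β i))
    (hne : ∀ i, f i ≠ 0)
    (hI : I = Ideal.span (Set.range f))
    (δ τ : ℤ) (hδ : δ = (∑ i, (α i : ℤ)) - d) (hτ : τ = ∑ i, (β i : ℤ)) :
    (∀ i : ℤ, (i < 0 ∨ δ < i) → AcompZ k d n I i = ⊥) ∧
    (∃ e : (AcompZ k d n I δ) ≃ₗ[T k n] T k n,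
      (∀ (a b : ℕ), (a : ℤ) = δ →
        ∀ s : AcompZ k d n I δ, (s : B k d n ⧸ I) ∈ Scomp k d n I (a, b) →
          e s ∈ TcompZ k n ((b : ℤ) - τ)) ∧
      (∀ (a b : ℕ), (a : ℤ) = δ →
        ∀ t : T k n, t ∈ TcompZ k n ((b : ℤ) - τ) →
          ((e.symm t : AcompZ k d n I δ) : B k d n ⧸ I) ∈ Scomp k d n I (a, b))) := by
  obtain ⟨s, hs, h1, h2⟩ := socle_B k d n I f α β hfm hreg hbihom hI δ τ hδ hτ
  have hsx : s.IsWeightedHomogeneous (wxz d n) δ := wz_wxz k d n hs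
  have hfz : ∀ i, (f i).IsWeightedHomogeneous (wz d n) ((α i : ℤ), (β i : ℤ)) :=
    fun i => (bwt_iff k d n).1 (hbihom i)
  have hfx : ∀ i, (f i).IsWeightedHomogeneous (wxz d n) (α i : ℤ) :=
    fun i => wz_wxz k d n (hfz i)
  have hone : (1 : B k d n) ∉ mxB k d n := by
    rw [mem_mxB]
    push Not
    exact ⟨0, by simp, by simp⟩
  have hδ0 : 0 ≤ δ := by
    have hs0 : s ≠ 0 := by
      rintro rfl
      exact hone ((h1 1).1 (by simp))
    obtain ⟨c, hc⟩ := ne_zero_iff.1 hs0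
    rw [← hsx hc, Finsupp.weight_apply, Finsupp.sum]
    refine Finset.sum_nonneg ?_
    rintro (i | i) _ <;> simp [wxz]
  obtain ⟨D, rfl⟩ := Int.eq_ofNat_of_zero_le hδ0
  have hvan := vanish k d n I f _ hfx hI hsx h1 h2
  have hAmem : ∀ (a : ℕ) (x : B k d n ⧸ I), x ∈ AcompZ k d n I (a : ℤ) ↔
      ∃ u : B k d n, u.IsWeightedHomogeneous (wxz d n) (a : ℤ) ∧ Ideal.Quotient.mk I u = x ∧
        ∃ N, ∀ c ∈ mxB k d n ^ N, c * u ∈ I := by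
    intro a x
    unfold AcompZ SxDegZ
    rw [if_pos (Int.natCast_nonneg a), Int.toNat_natCast, Submodule.mem_inf,
      Submodule.restrictScalars_mem, mem_SxDeg]
    constructor
    · rintro ⟨h, u, hu, rfl⟩
      exact ⟨u, (wx_iff k d n).1 hu, rfl, (mem_H0 k d n I).1 h⟩
    · rintro ⟨u, hu, rfl, h⟩
      exact ⟨(mem_H0 k d n I).2 h, u, (wx_iff k d n).2 hu, rfl⟩
  have hsm : ∀ t : T k n, t • Ideal.Quotient.mk I s =
      Ideal.Quotient.mk I (algebraMap (T k n) (B k d n) t * s) := by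
    intro t; rw [← Algebra.smul_def]; rfl
  have hsA : Ideal.Quotient.mk I s ∈ AcompZ k d n I (D : ℤ) := by
    rw [hAmem]
    exact ⟨s, hsx, rfl, 1, fun c hc => (h1 c).2 (by simpa using hc)⟩
  constructor
  · intro i hi
    by_cases hi0 : i < 0
    · unfold AcompZ SxDegZ
      rw [if_neg (by omega), inf_bot_eq]
    · obtain ⟨a, rfl⟩ := Int.eq_ofNat_of_zero_le (not_lt.1 hi0)
      rw [eq_bot_iff]
      intro x hx
      obtain ⟨u, hu, rfl, N, hN⟩ := (hAmem a x).1 hx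
      rw [Submodule.mem_bot, Ideal.Quotient.eq_zero_iff_mem]
      exact hvan N _ u (by tauto) hu hN
  · let φ : T k n →ₗ[T k n] AcompZ k d n I (D : ℤ) :=
      LinearMap.toSpanSingleton (T k n) _ ⟨Ideal.Quotient.mk I s, hsA⟩
    have hφ : ∀ t, ((φ t : AcompZ k d n I (D : ℤ)) : B k d n ⧸ I) =
        Ideal.Quotient.mk I (algebraMap (T k n) (B k d n) t * s) := fun t => hsm t
    have hinj : Function.Injective φ := by
      rw [injective_iff_map_eq_zero]
      intro t ht
      have := hφ t
      rw [ht] at this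
      apply alg_mem_mxB k d n
      rw [← h1, ← Ideal.Quotient.eq_zero_iff_mem, ← this]
      rfl
    have hsurj : Function.Surjective φ := by
      rintro ⟨x, hx⟩
      obtain ⟨u, hu, rfl, N, hN⟩ := (hAmem D x).1 hx
      have hx' : ∀ j : Fin d, X (Sum.inl j) * u ∈ I := by
        intro j
        refine hvan N (1 + D) _ (by omega)
          ((isWeightedHomogeneous_X k (wxz d n) (Sum.inl j)).mul hu) ?_
        intro c hc
        rw [mul_left_comm]
        exact I.mul_mem_left _ (hN c hc)
      have hm : ∀ c ∈ mxB k d n, c * u ∈ I := by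
        intro c hc
        refine Submodule.span_induction (p := fun c _ => c * u ∈ I) ?_ ?_ ?_ ?_ hc
        · rintro _ ⟨j, rfl⟩; exact hx' j
        · simp
        · intro a b _ _ ha hb; rw [add_mul]; exact I.add_mem ha hb
        · intro a b _ hb; rw [smul_eq_mul, mul_assoc]; exact I.mul_mem_left _ hb
      obtain ⟨r, hr⟩ := h2 u hm
      obtain ⟨t, ht⟩ := exists_T k d n r
      refine ⟨t, Subtype.ext ?_⟩
      rw [hφ]
      show _ = Ideal.Quotient.mk I u
      rw [eq_comm, Ideal.Quotient.eq]
      have := I.add_mem hr ((h1 _).2 ht)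
      convert this using 1
      ring
    let e := LinearEquiv.ofBijective φ ⟨hinj, hsurj⟩
    refine ⟨e.symm, ?_, ?_⟩
    · intro a b ha x hx
      obtain ⟨t, rfl⟩ := hsurj x
      have het : e.symm (φ t) = t := e.symm_apply_apply t
      rw [het]
      rw [hφ] at hx
      obtain ⟨u, hu, hut⟩ := hx
      have hut' : Ideal.Quotient.mk I u =
        Ideal.Quotient.mk I (algebraMap (T k n) (B k d n) t * s) := hut
      rw [Ideal.Quotient.eq] at hut'
      have hu' : u.IsWeightedHomogeneous (wz d n) ((a : ℤ), (b : ℤ)) := (bwt_iff k d n).1 hu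
      have h3 := hut'
      rw [hI] at h3
      have h4 := hg_span k (wz d n) f _ hfz h3 ((a : ℤ), (b : ℤ))
      rw [map_sub, comp_mul k (wz d n) hs, weightedHomogeneousComponent_of_mem hu', if_pos rfl,
        ← hI] at h4
      have h5 := I.sub_mem h4 hut'
      rw [sub_sub_sub_cancel_left, ← sub_mul, h1, mem_mxB] at h5
      rw [mem_TcompZ]
      intro c hc
      by_contra hcon
      obtain ⟨i, hi⟩ := h5 (c.mapDomain Sum.inr) (by
        rw [mem_support_iff, coeff_sub, coeff_weightedHomogeneousComponent, weight_mapDomain,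
          if_neg, sub_zero, coeff_alg]
        · exact hc
        · intro hh
          exact hcon (congrArg Prod.snd hh))
      exact hi (mapDomain_inl d n c i)
    · intro a b ha t ht
      show ((φ t : AcompZ k d n I (D : ℤ)) : B k d n ⧸ I) ∈ _
      rw [hφ]
      refine ⟨algebraMap (T k n) (B k d n) t * s, ?_, rfl⟩
      have h3 := (alg_hom_wz k d n ht).mul hs
      have h4 : ((0 : ℤ), (b : ℤ) - τ) + ((D : ℤ), τ) = ((a : ℤ), (b : ℤ)) := by
        ext <;> simp [ha]
      rw [h4] at h3
      exact (bwt_iff k d n).2 h3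

end Stmt3
end
end

section
/- Let k be a field, R = k[x_1,…,x_d], T = k[y_1,…,y_n], and B = R ⊗_k T, bigraded by bideg x_i = (1,0) and bideg y_j = (0,1). Let f_1,…,f_d be a B-regular sequence of bihomogeneous elements contained in m = (x_1,…,x_d)B, set I = (f_1,…,f_d), S = B/I, δ = (Σα_i) − d, τ = Σβ_i where bideg f_i = (α_i,β_i), and A = H^0_m(S). Let 𝔅 be any d×d matrix of bihomogeneous elements of B with [f_1 … f_d] = [x_1 … x_d]·𝔅. Then det 𝔅 ∉ I, det 𝔅 is a bihomogeneous form of bidegree (δ,τ) modulo I, I : (x_1,…,x_d) = I + (det 𝔅), and the T-module A_δ is generated by the image of det 𝔅. -/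
/-!
STATEMENT 4: With `B = k[x_1,…,x_d] ⊗_k k[y_1,…,y_n]` bigraded as usual,
`f_1,…,f_d ⊆ m = (x_1,…,x_d)B` a bihomogeneous `B`-regular sequence with
`bideg f_i = (α_i, β_i)`, `I = (f_1,…,f_d)`, `S = B/I`, `δ = (Σα_i) − d`, `τ = Σβ_i`,
`A = H⁰_m(S)`, and `𝔅` a `d×d` matrix of bihomogeneous elements of `B` with
`[f_1 … f_d] = [x_1 … x_d]·𝔅`: then `det 𝔅 ∉ I`, `det 𝔅` is bihomogeneous of bidegree
`(δ,τ)`, `I : (x_1,…,x_d) = I + (det 𝔅)`, and the `T`-module `A_δ` is generated by the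
image of `det 𝔅`.
-/

open MvPolynomial

noncomputable section

namespace Stmt4

variable (k : Type) [Field k] (d n : ℕ)

/-- `B = R ⊗_k T = k[x_1,…,x_d,y_1,…,y_n]`. -/
abbrev B := MvPolynomial (Fin d ⊕ Fin n) k

/-- `T = k[y_1,…,y_n]`. -/
abbrev T := MvPolynomial (Fin n) k

/-- `B` is a `T`-algebra via `y_j ↦ y_j`. -/
instance : Algebra (T k n) (B k d n) :=
  ((rename Sum.inr : T k n →ₐ[k] B k d n).toRingHom).toAlgebra

/-- The bigrading weight: `bideg x_i = (1,0)`, `bideg y_j = (0,1)`. -/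
def bwt : (Fin d ⊕ Fin n) → ℕ × ℕ := Sum.elim (fun _ => (1, 0)) (fun _ => (0, 1))

/-- The `x`-degree weight. -/
def wx : (Fin d ⊕ Fin n) → ℕ := Sum.elim (fun _ => 1) (fun _ => 0)

/-- The ideal `m = (x_1,…,x_d)B`. -/
def mxB : Ideal (B k d n) := Ideal.span (Set.range fun i : Fin d => (X (Sum.inl i) : B k d n))

variable (I : Ideal (B k d n))

/-- `A = H⁰_m(S)`: elements of `S = B/I` annihilated by a power of `m`. -/
def H0 : Submodule (B k d n) (B k d n ⧸ I) :=
  ⨆ N : ℕ, Submodule.torsionBySet (B k d n) (B k d n ⧸ I)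
    ((mxB k d n ^ N : Ideal (B k d n)) : Set (B k d n))

/-- The bigraded component of `S = B/I` in bidegree `p`. -/
def Scomp (p : ℕ × ℕ) : Submodule k (B k d n ⧸ I) :=
  (weightedHomogeneousSubmodule k (bwt d n) p).map (Ideal.Quotient.mkₐ k I).toLinearMap

/-- The graded strand `S_j = ⊕_b S_{(j,b)}` of `S` in `x`-degree `j`, as a `T`-module. -/
def SxDeg (j : ℕ) : Submodule (T k n) (B k d n ⧸ I) :=
  Submodule.span (T k n) ((Ideal.Quotient.mk I) '' {g : B k d n | g.IsWeightedHomogeneous (wx d n) j})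

/-- The graded strand of `S` in (possibly negative) `x`-degree `i : ℤ`. -/
def SxDegZ (i : ℤ) : Submodule (T k n) (B k d n ⧸ I) :=
  if 0 ≤ i then SxDeg k d n I i.toNat else ⊥

/-- The graded strand `A_i = ⊕_b A_{(i,b)}` of `A = H⁰_m(S)`, as a `T`-module. -/
def AcompZ (i : ℤ) : Submodule (T k n) (B k d n ⧸ I) :=
  (H0 k d n I).restrictScalars (T k n) ⊓ SxDegZ k d n I i

/-- The graded component of `T` in (possibly negative) degree `j`. -/
def TcompZ (j : ℤ) : Submodule k (T k n) :=
  if 0 ≤ j then homogeneousSubmodule (Fin n) k j.toNat else ⊥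

section Koszul
variable {R : Type*} [CommRing R]

/-- Koszul differential on functions on lists -/
def kD {ι : Type*} (x : ι → R) : (List ι → R) → List ι → R
  | _, [] => 0
  | w, t :: l => x t * w l - kD x (fun l' => w (t :: l')) l

/-- contraction -/
def kC {ι : Type*} [Fintype ι] (c : ι → R) (w : List ι → R) (l : List ι) : R :=
  ∑ t, c t * w (t :: l)

variable {ι : Type*} (x : ι → R)

lemma kD_add (u v : List ι → R) (l : List ι) :
    kD x (fun l => u l + v l) l = kD x u l + kD x v l := by
  induction l generalizing u v with
  | nil => simp [kD]
  | cons t l ih => simp only [kD, ih]; ring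

lemma kD_smul (b : R) (v : List ι → R) (l : List ι) :
    kD x (fun l => b * v l) l = b * kD x v l := by
  induction l generalizing v with
  | nil => simp [kD]
  | cons t l ih => simp only [kD, ih]; ring

lemma kD_sub (u v : List ι → R) (l : List ι) :
    kD x (fun l => u l - v l) l = kD x u l - kD x v l := by
  induction l generalizing u v with
  | nil => simp [kD]
  | cons t l ih => simp only [kD, ih]; ring

lemma kD_zero (l : List ι) : kD x (fun _ => 0) l = 0 := by
  simpa using kD_smul x 0 (fun _ => 0) l

lemma kD_sum {κ : Type*} (s : Finset κ) (u : κ → List ι → R) (l : List ι) :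
    kD x (fun l => ∑ i ∈ s, u i l) l = ∑ i ∈ s, kD x (u i) l := by
  classical
  induction s using Finset.induction_on with
  | empty => simpa using kD_zero x l
  | insert a s ha ih => simp only [Finset.sum_insert ha, kD_add, ih]

lemma kD_kD (w : List ι → R) (l : List ι) : kD x (kD x w) l = 0 := by
  induction l generalizing w with
  | nil => simp [kD]
  | cons t l ih =>
    have h : (fun l' => kD x w (t :: l')) =
      fun l' => x t * w l' - kD x (fun l'' => w (t :: l'')) l' := by
      funext l'; simp [kD]
    rw [kD, h, kD_sub, kD_smul, ih]; ring

lemma kD_mem {J : Ideal R} {i : ℕ} {w : List ι → R} (h : ∀ l, l.length = i → w l ∈ J)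
    (l : List ι) (hl : l.length = i + 1) : kD x w l ∈ J := by
  induction i generalizing w l with
  | zero =>
    match l, hl with
    | [t], _ => simpa [kD] using J.mul_mem_left _ (h [] rfl)
  | succ i ih =>
    match l, hl with
    | t :: l, hl =>
      simp only [List.length_cons, Nat.add_right_cancel_iff] at hl
      exact J.sub_mem (J.mul_mem_left _ (h l hl))
        (ih (fun l' hl' => h _ (by simp [hl'])) l hl)

lemma kD_mem_of_x {J : Ideal R} (h : ∀ t, x t ∈ J) (w : List ι → R) (l : List ι) :
    kD x w l ∈ J := by
  induction l generalizing w with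
  | nil => simp [kD]
  | cons t l ih => exact J.sub_mem (J.mul_mem_right _ (h t)) (ih _)

lemma kC_mem [Fintype ι] {J : Ideal R} (c : ι → R) {i : ℕ} {w : List ι → R}
    (h : ∀ l, l.length = i + 1 → w l ∈ J) (l : List ι) (hl : l.length = i) : kC c w l ∈ J :=
  J.sum_mem fun t _ => J.mul_mem_left _ (h _ (by simp [hl]))

lemma kD_kC [Fintype ι] (c : ι → R) (w : List ι → R) (l : List ι) :
    kD x (kC c w) l = (∑ t, c t * x t) * w l - kC c (kD x w) l := by
  have h : kC c w = fun l => ∑ t, c t * w (t :: l) := rfl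
  rw [h, kD_sum]
  simp only [kC, kD, kD_smul, Finset.sum_mul, ← Finset.sum_sub_distrib]
  refine Finset.sum_congr rfl fun t _ => ?_
  ring

/-- exactness modulo a generator -/
def kExact (J : Ideal R) (i : ℕ) (θ : List ι → R) : Prop :=
  ∀ w : List ι → R, (∀ l, l.length = i + 1 → kD x w l ∈ J) →
    ∃ (b : R) (v : List ι → R), ∀ l, l.length = i → w l - b * θ l - kD x v l ∈ J

lemma split_mem {J : Ideal R} {r : R} {i : ℕ} {w : List ι → R}
    (h : ∀ l, l.length = i → w l ∈ J ⊔ Ideal.span {r}) :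
    ∃ v : List ι → R, ∀ l, l.length = i → w l - r * v l ∈ J := by
  have : ∀ l, ∃ a, l.length = i → w l - r * a ∈ J := by
    intro l
    by_cases hl : l.length = i
    · obtain ⟨y, hy, z, hz, e⟩ := Submodule.mem_sup.1 (h l hl)
      obtain ⟨a, rfl⟩ := Ideal.mem_span_singleton'.1 hz
      refine ⟨a, fun _ => ?_⟩
      rw [← e]; convert hy using 1; ring
    · exact ⟨0, fun h => absurd h hl⟩
  choose v hv using this
  exact ⟨v, hv⟩

lemma kExact_down [Fintype ι] {J : Ideal R} {r : R} (hr : ∀ a, r * a ∈ J → a ∈ J) {i : ℕ}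
    {θ θ' : List ι → R} (c : ι → R) (hc : ∑ t, c t * x t = r)
    (hθ : ∀ l, l.length = i + 1 → kD x θ' l - r * θ l ∈ J)
    (h : kExact x (J ⊔ Ideal.span {r}) i θ') : kExact x J (i + 1) θ := by
  intro w hw
  have hrm : r ∈ J ⊔ Ideal.span {r} :=
    Ideal.mem_sup_right (Ideal.subset_span rfl)
  have hD : ∀ l, l.length = i + 1 → kD x (kC c w) l - r * w l ∈ J := by
    intro l hl
    rw [kD_kC, hc]
    have := kC_mem c hw l hl
    convert J.neg_mem this using 1; ring
  obtain ⟨b, v, hv⟩ := h (kC c w) (fun l hl => by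
    have := Ideal.add_mem _ (Ideal.mem_sup_left (hD l hl)) (Ideal.mul_mem_right (w l) _ hrm)
    simpa using this)
  obtain ⟨u, hu⟩ := split_mem hv
  refine ⟨b, u, fun l hl => hr _ ?_⟩
  have h1 := kD_mem x hu l hl
  simp only [kD_sub, kD_smul, kD_kD] at h1
  have := J.add_mem (J.sub_mem h1 (hD l hl)) (J.mul_mem_left b (hθ l hl))
  convert this using 1; ring

lemma kExact_up {J : Ideal R} {r : R} (hr : ∀ a, r * a ∈ J → a ∈ J) {i : ℕ}
    {θ θ' : List ι → R}
    (hθ : ∀ l, l.length = i + 1 → kD x θ' l - r * θ l ∈ J)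
    (h : kExact x J (i + 1) θ) (h0 : kExact x J i (fun _ => 0)) :
    kExact x (J ⊔ Ideal.span {r}) i θ' := by
  intro w hw
  obtain ⟨e, he⟩ := split_mem hw
  obtain ⟨b, v, hv⟩ := h e (fun l hl => hr _ (by
    have := kD_mem x he l hl
    simp only [kD_sub, kD_smul, kD_kD] at this
    simpa using J.neg_mem this))
  obtain ⟨_, u, hu⟩ := h0 (fun l => w l - r * v l - b * θ' l) (fun l hl => by
    simp only [kD_sub, kD_smul]
    have := J.sub_mem (J.add_mem (he l hl) (J.mul_mem_left r (hv l hl)))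
      (J.mul_mem_left b (hθ l hl))
    convert this using 1; ring)
  refine ⟨b, u, fun l hl => ?_⟩
  have h1 : w l - r * v l - b * θ' l - kD x u l ∈ J := by simpa using hu l hl
  have h2 : r * v l ∈ J ⊔ Ideal.span {r} :=
    Ideal.mul_mem_right _ _ (Ideal.mem_sup_right (Ideal.subset_span rfl))
  convert Ideal.add_mem _ (Ideal.mem_sup_left h1) h2 using 1; ring

/-- generator is faithful -/
lemma kInj_up {J : Ideal R} {r : R} (hr : ∀ a, r * a ∈ J → a ∈ J) {i : ℕ}
    {θ θ' : List ι → R}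
    (hθ : ∀ l, l.length = i + 1 → kD x θ' l - r * θ l ∈ J) (b : R)
    (v : List ι → R) (hv : ∀ l, l.length = i → b * θ' l - kD x v l ∈ J ⊔ Ideal.span {r}) :
    ∃ u : List ι → R, ∀ l, l.length = i + 1 → b * θ l - kD x u l ∈ J := by
  obtain ⟨u, hu⟩ := split_mem hv
  refine ⟨u, fun l hl => hr _ ?_⟩
  have h1 := kD_mem x hu l hl
  simp only [kD_sub, kD_smul, kD_kD] at h1
  convert J.sub_mem h1 (J.mul_mem_left b (hθ l hl)) using 1; ring

/-- partial determinants -/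
noncomputable def kθ {p : ℕ} (C : Matrix (Fin p) (Fin p) R) (j : ℕ) (l : List (Fin p)) : R :=
  Matrix.det (Matrix.of fun s t : Fin p =>
    if (s : ℕ) < j then C t s else if l[(s : ℕ) - j]? = some t then 1 else 0)

lemma kθ_succ {p : ℕ} (C : Matrix (Fin p) (Fin p) R) (j : Fin p) (l : List (Fin p)) :
    kθ C (j + 1) l = kC (fun t => C t j) (kθ C j) l := by
  set A : Matrix (Fin p) (Fin p) R := Matrix.of fun s t : Fin p =>
    if (s : ℕ) < j then C t s else if l[(s : ℕ) - (j + 1)]? = some t then 1 else 0 with hA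
  have h1 : kθ C (j + 1) l = (A.updateRow j (fun t => C t j)).det := by
    unfold kθ; congr 1; ext s t
    rw [Matrix.updateRow_apply]
    by_cases hs : s = j
    · subst hs; simp
    · have : (s : ℕ) ≠ j := fun h => hs (Fin.ext h)
      simp only [hs, if_false, hA, Matrix.of_apply]
      have : (s : ℕ) < j + 1 ↔ (s : ℕ) < j := by omega
      simp [this]
  have h2 : ∀ r, kθ C j (r :: l) = (A.updateRow j (Pi.single r 1)).det := by
    intro r
    unfold kθ; congr 1; ext s t
    rw [Matrix.updateRow_apply]
    by_cases hs : s = j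
    · subst hs; simp [Pi.single_apply, eq_comm]
    · have hne : (s : ℕ) ≠ j := fun h => hs (Fin.ext h)
      simp only [hs, if_false, hA, Matrix.of_apply]
      by_cases hlt : (s : ℕ) < j
      · simp [hlt]
      · have : (s : ℕ) - j = (s - (j + 1)) + 1 := by omega
        simp [hlt, this]
  have h3 : (fun t => C t j) = ∑ r, C r j • (Pi.single r 1 : Fin p → R) := by
    ext t; simp [Finset.sum_apply, Pi.single_apply]
  have h4 : kC (fun t => C t j) (kθ C j) l =
      ∑ r, C r j * (A.updateRow j (Pi.single r 1)).det := by simp only [kC, h2]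
  rw [h4, h1, h3]
  have := (Matrix.detRowAlternating (n := Fin p) (R := R)).toMultilinearMap.map_update_sum
    Finset.univ j (fun r => C r j • (Pi.single r 1 : Fin p → R)) A
  refine this.trans (Finset.sum_congr rfl fun r _ => ?_)
  exact Matrix.det_updateRow_smul A j (C r j) _

lemma kθ_zero_ofFn {p : ℕ} (C : Matrix (Fin p) (Fin p) R) (t : Fin p → Fin p) :
    kθ C 0 (List.ofFn t) = Matrix.det (Matrix.of fun s r => if t s = r then (1 : R) else 0) := by
  unfold kθ; congr 1; ext s r; simp

lemma kD_ofFn {i : ℕ} (w : List ι → R) (t : Fin (i + 1) → ι) :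
    kD x w (List.ofFn t) =
    ∑ s : Fin (i + 1), (-1) ^ (s : ℕ) * x (t s) * w (List.ofFn (s.removeNth t)) := by
  induction i generalizing w with
  | zero => simp [kD]
  | succ i ih =>
    rw [List.ofFn_succ, kD, ih, Fin.sum_univ_succ (n := i + 1), sub_eq_add_neg, ← Finset.sum_neg_distrib]
    congr 1
    · simp [Fin.removeNth_zero, Fin.tail_def]
    · refine Finset.sum_congr rfl fun s _ => ?_
      have : List.ofFn (s.succ.removeNth t) =
          t 0 :: List.ofFn (s.removeNth (fun i => t i.succ)) := by
        rw [List.ofFn_succ]; simp [Fin.removeNth]; rfl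
      rw [this]; simp [pow_succ]

lemma kD_kθ_zero {p : ℕ} (x : Fin p → R) (C : Matrix (Fin p) (Fin p) R) (l : List (Fin p))
    (hl : l.length = p + 1) : kD x (kθ C 0) l = 0 := by
  obtain ⟨t, rfl⟩ : ∃ t : Fin (p + 1) → Fin p, l = List.ofFn t := by
    refine ⟨fun i => l.get (i.cast hl.symm), ?_⟩
    apply List.ext_getElem
    · simp [hl]
    · intro i h1 h2; rw [List.getElem_ofFn]; simp
  rw [kD_ofFn]
  set N : Matrix (Fin (p + 1)) (Fin (p + 1)) R := Matrix.of fun s r =>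
    Fin.cases (x (t s)) (fun r => if t s = r then 1 else 0) r with hN
  have h1 : N.det = ∑ s : Fin (p + 1), (-1) ^ (s : ℕ) * x (t s) * kθ C 0 (List.ofFn (s.removeNth t)) := by
    rw [Matrix.det_succ_column_zero]
    refine Finset.sum_congr rfl fun s _ => ?_
    rw [kθ_zero_ofFn]
    rfl
  rw [← h1]
  let u : Fin (p + 1) → R := Fin.cases 1 (fun r => - x r)
  have h2 : N.mulVec u = 0 := by
    ext s
    simp [Matrix.mulVec, dotProduct, Fin.sum_univ_succ, hN, u]
  have h3 := congrArg (fun v => (N.adjugate.mulVec v) 0) h2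
  simpa [Matrix.mulVec_mulVec, Matrix.adjugate_mul, Matrix.smul_mulVec, u] using h3

/-- ideals of initial segments -/
def pre {p : ℕ} (f : Fin p → R) (j : ℕ) : Ideal R := Ideal.span (f '' {s | (s : ℕ) < j})

lemma pre_succ {p : ℕ} (f : Fin p → R) (j : Fin p) :
    pre f (j + 1) = pre f j ⊔ Ideal.span {f j} := by
  have : {s : Fin p | (s : ℕ) < j + 1} = {s : Fin p | (s : ℕ) < j} ∪ {j} := by
    ext s; simp [Fin.ext_iff]; omega
  rw [pre, this, Set.image_union, Ideal.span_union, Set.image_singleton, pre]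

lemma pre_zero {p : ℕ} (f : Fin p → R) : pre f 0 = ⊥ := by simp [pre]

lemma pre_top {p : ℕ} (f : Fin p → R) : pre f p = Ideal.span (Set.range f) := by
  simp [pre]

def preReg {p : ℕ} (f : Fin p → R) : Prop := ∀ j : Fin p, ∀ a, f j * a ∈ pre f j → a ∈ pre f j

lemma kD_kθ_mem {p : ℕ} (x f : Fin p → R) (C : Matrix (Fin p) (Fin p) R)
    (hf : ∀ i, ∑ t, C t i * x t = f i) (j : ℕ) (hj : j ≤ p) (l : List (Fin p))
    (hl : l.length + j = p + 1) : kD x (kθ C j) l ∈ pre f j := by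
  induction j generalizing l with
  | zero => rw [kD_kθ_zero x C l hl]; exact zero_mem _
  | succ j ih =>
    have e : kθ C (j + 1) = kC (fun t => C t ⟨j, hj⟩) (kθ C j) := by
      funext l; exact kθ_succ C ⟨j, hj⟩ l
    rw [e, kD_kC, hf, pre_succ f ⟨j, hj⟩]
    refine Ideal.sub_mem _ (Ideal.mem_sup_right (Ideal.mul_mem_right _ _ (Ideal.subset_span rfl)))
      (Ideal.mem_sup_left (kC_mem _ (i := l.length) ?_ l rfl))
    intro l' hl'
    exact ih (by omega) l' (by omega)

lemma kD_kθ_step {p : ℕ} (x f : Fin p → R) (C : Matrix (Fin p) (Fin p) R)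
    (hf : ∀ i, ∑ t, C t i * x t = f i) (j : Fin p) (i : ℕ) (hi : i + 1 + j = p) (l : List (Fin p))
    (hl : l.length = i + 1) : kD x (kθ C (j + 1)) l - f j * kθ C j l ∈ pre f j := by
  have e : kθ C (j + 1) = kC (fun t => C t j) (kθ C j) := by
    funext l; exact kθ_succ C j l
  rw [e, kD_kC, hf]
  have : kC (fun t => C t j) (kD x (kθ C j)) l ∈ pre f j :=
    kC_mem _ (fun l' hl' => kD_kθ_mem x f C hf j j.2.le l' (by omega)) l hl
  convert neg_mem this using 1; ring

lemma one_hf {p : ℕ} (x : Fin p → R) (i : Fin p) :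
    ∑ t, (1 : Matrix (Fin p) (Fin p) R) t i * x t = x i := by
  simp [Matrix.one_apply]

lemma kExact_x_lt {p : ℕ} (x : Fin p → R) (hx : preReg x) (i j : ℕ) (h : i + j < p) :
    kExact x (pre x j) i (fun _ => 0) := by
  induction i generalizing j with
  | zero =>
    intro w hw
    refine ⟨0, fun _ => 0, fun l hl => ?_⟩
    have hj : j < p := by omega
    have := hw [⟨j, hj⟩] rfl
    have hl : l = [] := List.length_eq_zero_iff.1 hl
    subst hl
    simp only [kD, sub_zero, mul_zero] at this ⊢
    exact hx ⟨j, hj⟩ _ this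
  | succ i ih =>
    have hj : j < p := by omega
    refine kExact_down x (hx ⟨j, hj⟩) (θ' := fun _ => 0) _ (one_hf x ⟨j, hj⟩) ?_ ?_
    · intro l _; simp [kD_zero]
    · have := ih (j + 1) (by omega)
      rwa [pre_succ x ⟨j, hj⟩] at this

lemma kExact_x_eq {p : ℕ} (x : Fin p → R) (hx : preReg x) (i j : ℕ) (h : i + j = p) :
    kExact x (pre x j) i (kθ 1 j) := by
  induction i generalizing j with
  | zero =>
    obtain rfl : j = p := by omega
    intro w hw
    refine ⟨w [], fun _ => 0, fun l hl => ?_⟩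
    have hl : l = [] := List.length_eq_zero_iff.1 hl
    subst hl
    have : kθ (1 : Matrix (Fin j) (Fin j) R) j [] = 1 := by
      have : (Matrix.of fun s t : Fin j => if (s : ℕ) < j then (1 : Matrix (Fin j) (Fin j) R) t s
        else if ([] : List (Fin j))[(s : ℕ) - j]? = some t then 1 else 0) = 1 := by
        ext s t; simp [Matrix.one_apply, eq_comm]
      rw [kθ, this, Matrix.det_one]
    simp [this, kD]
  | succ i ih =>
    have hj : j < p := by omega
    refine kExact_down x (hx ⟨j, hj⟩) (θ' := kθ 1 (j + 1)) _ (one_hf x ⟨j, hj⟩) ?_ ?_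
    · exact kD_kθ_step x x 1 (one_hf x) ⟨j, hj⟩ i (by simpa using h)
    · have := ih (j + 1) (by omega)
      rwa [pre_succ x ⟨j, hj⟩] at this

lemma kExact_f_lt {p : ℕ} (x f : Fin p → R) (hx : preReg x) (hf : preReg f) (i j : ℕ)
    (h : i + j < p) : kExact x (pre f j) i (fun _ => 0) := by
  induction j generalizing i with
  | zero => 
    have := kExact_x_lt x hx i 0 h
    rwa [pre_zero] at this ⊢
  | succ j ih =>
    have hj : j < p := by omega
    rw [pre_succ f ⟨j, hj⟩]
    refine kExact_up x (hf ⟨j, hj⟩) (θ := fun _ => 0) ?_ (ih _ (by omega)) (ih _ (by omega))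
    intro l _; simp [kD_zero]

lemma kθ_zero_eq {p : ℕ} (C C' : Matrix (Fin p) (Fin p) R) : kθ C 0 = kθ C' 0 := by
  funext l; simp [kθ]

lemma kExact_f_eq {p : ℕ} (x f : Fin p → R) (hx : preReg x) (hf : preReg f)
    (C : Matrix (Fin p) (Fin p) R) (hC : ∀ i, ∑ t, C t i * x t = f i) (i j : ℕ)
    (h : i + j = p) : kExact x (pre f j) i (kθ C j) := by
  induction j generalizing i with
  | zero =>
    have := kExact_x_eq x hx i 0 h
    rw [pre_zero] at this ⊢
    rwa [kθ_zero_eq C 1]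
  | succ j ih =>
    have hj : j < p := by omega
    rw [pre_succ f ⟨j, hj⟩]
    exact kExact_up x (hf ⟨j, hj⟩) (kD_kθ_step x f C hC ⟨j, hj⟩ i (by simp; omega))
      (ih _ (by omega)) (kExact_f_lt x f hx hf _ _ (by simp; omega))

lemma kInj_f {p : ℕ} (x f : Fin p → R) (hf : preReg f)
    (C : Matrix (Fin p) (Fin p) R) (hC : ∀ i, ∑ t, C t i * x t = f i) (i j : ℕ)
    (h : i + j = p) (b : R) (v : List (Fin p) → R)
    (hv : ∀ l, l.length = i → b * kθ C j l - kD x v l ∈ pre f j) :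
    b ∈ Ideal.span (Set.range x) := by
  induction j generalizing i v with
  | zero =>
    obtain rfl : i = p := by omega
    have h1 := hv (List.ofFn id) (by simp)
    have h2 : kθ C 0 (List.ofFn id) = 1 := by
      rw [kθ_zero_ofFn]
      have : (Matrix.of fun s r : Fin i => if id s = r then (1 : R) else 0) = 1 := by
        ext s r; simp [Matrix.one_apply]
      rw [this, Matrix.det_one]
    rw [pre_zero, h2, mul_one, Ideal.mem_bot, sub_eq_zero] at h1
    rw [h1]
    exact kD_mem_of_x x (fun t => Ideal.subset_span (Set.mem_range_self t)) _ _
  | succ j ih =>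
    have hj : j < p := by omega
    rw [pre_succ f ⟨j, hj⟩] at hv
    obtain ⟨u, hu⟩ := kInj_up x (hf ⟨j, hj⟩)
      (kD_kθ_step x f C hC ⟨j, hj⟩ i (by simp; omega)) b v hv
    exact ih _ (by omega) u hu

lemma kθ_top {p : ℕ} (C : Matrix (Fin p) (Fin p) R) : kθ C p [] = C.det := by
  rw [kθ, ← Matrix.det_transpose C]; congr 1; ext s t; simp

/-- Wiebe's theorem. -/
theorem wiebe {p : ℕ} (x f : Fin p → R) (hx : preReg x) (hf : preReg f)
    (C : Matrix (Fin p) (Fin p) R) (hC : ∀ i, ∑ t, C t i * x t = f i) :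
    (∀ a, (∀ t, x t * a ∈ Ideal.span (Set.range f)) →
      a ∈ Ideal.span (Set.range f) ⊔ Ideal.span {C.det}) ∧
    (∀ t, x t * C.det ∈ Ideal.span (Set.range f)) ∧
    (∀ b, b * C.det ∈ Ideal.span (Set.range f) → b ∈ Ideal.span (Set.range x)) := by
  rw [← pre_top f]
  refine ⟨fun a ha => ?_, fun t => ?_, fun b hb => ?_⟩
  · obtain ⟨b, v, h⟩ := kExact_f_eq x f hx hf C hC 0 p (by simp) (fun _ => a) (fun l hl => by
      match l, hl with
      | [t], _ => simpa [kD] using ha t)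
    have := h [] rfl
    rw [kθ_top] at this
    simp only [kD, sub_zero] at this
    have h2 : b * C.det ∈ Ideal.span {C.det} := Ideal.mul_mem_left _ _ (Ideal.subset_span rfl)
    have := Ideal.add_mem _ (Ideal.mem_sup_left (T := Ideal.span {C.det}) this)
      (Ideal.mem_sup_right h2)
    simpa using this
  · have := kD_kθ_mem x f C hC p le_rfl [t] (by simp; omega)
    simpa [kD, kθ_top] using this
  · refine kInj_f x f hf C hC 0 p (by simp) b (fun _ => 0) fun l hl => ?_
    have hl : l = [] := List.length_eq_zero_iff.1 hl
    subst hl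
    simpa [kD, kθ_top] using hb

end Koszul

section Apply

lemma preReg_of_isRegular {R : Type*} [CommRing R] {p : ℕ} (f : Fin p → R)
    (h : RingTheory.Sequence.IsRegular R (List.ofFn f)) : preReg f := by
  intro j a ha
  have h1 := h.regular_mod_prev j (by simp)
  have e : (Ideal.ofList ((List.ofFn f).take j) • ⊤ : Submodule R R) = pre f j := by
    rw [smul_eq_mul, Ideal.mul_top, pre, Ideal.ofList]
    congr 1
    ext r
    simp only [Set.mem_setOf_eq, Set.mem_image, List.mem_take_iff_getElem, List.getElem_ofFn,
      List.length_ofFn]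
    constructor
    · rintro ⟨i, hi, rfl⟩
      exact ⟨⟨i, by omega⟩, by simp; omega, rfl⟩
    · rintro ⟨s, hs, rfl⟩
      exact ⟨s, by have := s.2; omega, rfl⟩
  rw [e] at h1
  have h2 : (f j) • (Ideal.Quotient.mk (pre f j) a) = (f j) • (0 : R ⧸ pre f j) := by
    rw [smul_zero, ← Ideal.Quotient.mk_eq_mk, ← Submodule.Quotient.mk_smul]
    exact (Submodule.Quotient.mk_eq_zero _).2 ha
  have h3 : Ideal.Quotient.mk (pre f j) a = 0 := h1 (by simpa using h2)
  exact Ideal.Quotient.eq_zero_iff_mem.1 h3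

lemma preReg_X {K : Type} [Field K] {p q : ℕ} :
    preReg (fun i : Fin p => (X (Sum.inl i) : B K p q)) := by
  intro j a ha
  have e : pre (fun i : Fin p => (X (Sum.inl i) : B K p q)) j =
      Ideal.span (X '' (Sum.inl '' {s : Fin p | (s : ℕ) < j})) := by
    rw [pre, Set.image_image]
  rw [e, mem_ideal_span_X_image] at ha ⊢
  intro m hm
  have : m + Finsupp.single (Sum.inl j) 1 ∈ (X (Sum.inl j) * a : B K p q).support := by
    rw [mem_support_iff, mul_comm, coeff_mul_X]
    exact mem_support_iff.1 hm
  obtain ⟨i, hi, h⟩ := ha _ this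
  refine ⟨i, hi, ?_⟩
  obtain ⟨s, hs, rfl⟩ := hi
  have hne : s ≠ j := by rintro rfl; simp at hs
  simpa [Finsupp.single_apply, Ne.symm hne] using h

lemma weight_wx {p q : ℕ} (m : (Fin p ⊕ Fin q) →₀ ℕ) :
    Finsupp.weight (wx p q) m = (Finsupp.weight (bwt p q) m).1 := by
  induction m using Finsupp.induction_linear with
  | zero => simp
  | add a b ha hb => simp [ha, hb]
  | single i c => cases i <;> simp [Finsupp.weight_single, wx, bwt]

lemma wx_of_bwt {K : Type} [Field K] {p q : ℕ} {g : B K p q} {a b : ℕ}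
    (h : g ∈ weightedHomogeneousSubmodule K (bwt p q) (a, b)) :
    g.IsWeightedHomogeneous (wx p q) a := by
  intro m hm
  rw [weight_wx, (mem_weightedHomogeneousSubmodule _ _ _ _).1 h hm]

lemma rename_wx {K : Type} [Field K] {p q : ℕ} (c : T K q) :
    (rename Sum.inr c : B K p q).IsWeightedHomogeneous (wx p q) 0 := by
  induction c using MvPolynomial.induction_on with
  | C a => simpa using isWeightedHomogeneous_C _ _
  | add a b ha hb => rw [map_add]; exact ha.add hb
  | mul_X a i ha =>
    rw [map_mul, rename_X]
    exact ha.mul (isWeightedHomogeneous_X K (wx p q) (Sum.inr i))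

lemma exists_T_part {K : Type} [Field K] {p q : ℕ} (b : B K p q) :
    ∃ c : T K q, b - rename Sum.inr c ∈ mxB K p q := by
  induction b using MvPolynomial.induction_on with
  | C a => exact ⟨C a, by simp⟩
  | add a b ha hb =>
    obtain ⟨c, hc⟩ := ha
    obtain ⟨e, he⟩ := hb
    refine ⟨c + e, ?_⟩
    convert Ideal.add_mem _ hc he using 1
    rw [map_add]; ring
  | mul_X a i ha =>
    obtain ⟨c, hc⟩ := ha
    cases i with
    | inl i =>
      refine ⟨0, ?_⟩
      rw [map_zero, sub_zero]
      exact Ideal.mul_mem_left _ _ (Ideal.subset_span ⟨i, rfl⟩)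
    | inr i =>
      refine ⟨c * X i, ?_⟩
      rw [map_mul, rename_X, ← sub_mul]
      exact Ideal.mul_mem_right _ _ hc

lemma det_hom {σ K M : Type*} [Field K] [AddCommMonoid M] (w : σ → M) {p : ℕ}
    (C : Matrix (Fin p) (Fin p) (MvPolynomial σ K)) (e : Fin p → M)
    (h : ∀ t i, (C t i).IsWeightedHomogeneous w (e i)) :
    C.det.IsWeightedHomogeneous w (∑ i, e i) := by
  rw [Matrix.det_apply]
  refine IsWeightedHomogeneous.sum _ _ _ fun σ _ => ?_
  have h1 : (∏ i, C (σ i) i).IsWeightedHomogeneous w (∑ i, e i) :=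
    IsWeightedHomogeneous.prod _ _ _ fun i _ => h _ _
  rw [← mem_weightedHomogeneousSubmodule] at h1 ⊢
  rcases Int.units_eq_one_or (Equiv.Perm.sign σ) with h2 | h2 <;> rw [h2]
  · simpa using h1
  · simpa using h1

lemma comp_mem {K : Type} [Field K] {p q : ℕ} {f : Fin p → B K p q} {α : Fin p → ℕ}
    (h : ∀ i, (f i).IsWeightedHomogeneous (wx p q) (α i)) {g : B K p q}
    (hg : g ∈ Ideal.span (Set.range f)) (i : ℕ) :
    weightedHomogeneousComponent (wx p q) i g ∈ Ideal.span (Set.range f) := by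
  letI := MvPolynomial.weightedGradedAlgebra K (wx p q)
  refine weightedHomogeneousComponent_mem_of_mem K (wx p q)
    (Ideal.homogeneous_span _ _ ?_) hg i
  rintro _ ⟨i, rfl⟩
  exact ⟨α i, h i⟩

lemma smul_mk {K : Type} [Field K] {p q : ℕ} (I : Ideal (B K p q)) (c : T K q) (g : B K p q) :
    c • (Ideal.Quotient.mk I g) = Ideal.Quotient.mk I (rename Sum.inr c * g) := rfl

lemma mem_SxDeg {K : Type} [Field K] {p q : ℕ} {I : Ideal (B K p q)} {j : ℕ}
    {z : B K p q ⧸ I} (hz : z ∈ SxDeg K p q I j) :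
    ∃ g : B K p q, g.IsWeightedHomogeneous (wx p q) j ∧ Ideal.Quotient.mk I g = z := by
  induction hz using Submodule.span_induction with
  | mem z h => obtain ⟨g, hg, rfl⟩ := h; exact ⟨g, hg, rfl⟩
  | zero => exact ⟨0, isWeightedHomogeneous_zero _ _ _, map_zero _⟩
  | add a b _ _ ha hb =>
    obtain ⟨g, hg, rfl⟩ := ha
    obtain ⟨g', hg', rfl⟩ := hb
    exact ⟨g + g', hg.add hg', map_add _ _ _⟩
  | smul c a _ ha =>
    obtain ⟨g, hg, rfl⟩ := ha
    refine ⟨rename Sum.inr c * g, ?_, (smul_mk I c g).symm⟩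
    simpa using (rename_wx c).mul hg

lemma mem_H0 {K : Type} [Field K] {p q : ℕ} {I : Ideal (B K p q)} (g : B K p q) :
    Ideal.Quotient.mk I g ∈ H0 K p q I ↔ ∃ N : ℕ, ∀ u ∈ mxB K p q ^ N, u * g ∈ I := by
  have key : ∀ N : ℕ, Ideal.Quotient.mk I g ∈ Submodule.torsionBySet (B K p q) (B K p q ⧸ I)
      ((mxB K p q ^ N : Ideal (B K p q)) : Set (B K p q)) ↔ ∀ u ∈ mxB K p q ^ N, u * g ∈ I := by
    intro N
    rw [Submodule.mem_torsionBySet_iff]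
    constructor
    · intro h u hu
      exact Ideal.Quotient.eq_zero_iff_mem.1 (h ⟨u, hu⟩)
    · rintro h ⟨u, hu⟩
      exact Ideal.Quotient.eq_zero_iff_mem.2 (h u hu)
  rw [H0, Submodule.mem_iSup_of_directed]
  · exact exists_congr key
  · refine Monotone.directed_le fun a b hab => ?_
    exact Submodule.torsionBySet_le_torsionBySet_of_subset (Ideal.pow_le_pow_right hab)

end Apply

/-- `det 𝔅 ∉ I`; `det 𝔅` is a bihomogeneous form of bidegree `(δ,τ)`;
`I : (x_1,…,x_d) = I + (det 𝔅)`; and the `T`-module `A_δ` is generated by the image of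
`det 𝔅` in `S = B/I`. -/
theorem Adelta_generator
    (f : Fin d → B k d n) (α β : Fin d → ℕ)
    (hfm : ∀ i, f i ∈ mxB k d n)
    (hreg : RingTheory.Sequence.IsRegular (B k d n) (List.ofFn f))
    (hbihom : ∀ i, f i ∈ weightedHomogeneousSubmodule k (bwt d n) (α i, β i))
    (hne : ∀ i, f i ≠ 0) (hα : ∀ i, 1 ≤ α i)
    (hI : I = Ideal.span (Set.range f))
    (δ τ : ℕ) (hδ : (∑ i, α i) = δ + d) (hτ : τ = ∑ i, β i)
    (𝔅 : Matrix (Fin d) (Fin d) (B k d n))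
    (h𝔅hom : ∀ t i, 𝔅 t i ∈ weightedHomogeneousSubmodule k (bwt d n) (α i - 1, β i))
    (h𝔅 : ∀ i, f i = ∑ t, X (Sum.inl t) * 𝔅 t i) :
    𝔅.det ∉ I ∧
    𝔅.det ∈ weightedHomogeneousSubmodule k (bwt d n) (δ, τ) ∧
    (I : Submodule (B k d n) (B k d n)).colon (mxB k d n) = I ⊔ Ideal.span {𝔅.det} ∧
    AcompZ k d n I (δ : ℤ) =
      Submodule.span (T k n) {(Ideal.Quotient.mk I) 𝔅.det} := by
  have hC : ∀ i, ∑ t, 𝔅 t i * (X (Sum.inl t) : B k d n) = f i := by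
    intro i; rw [h𝔅 i]; exact Finset.sum_congr rfl fun t _ => mul_comm _ _
  obtain ⟨W1, W2, W3⟩ := wiebe (fun i : Fin d => (X (Sum.inl i) : B k d n)) f preReg_X
    (preReg_of_isRegular f hreg) 𝔅 hC
  rw [← hI] at W1 W2 W3
  have hmD : ∀ u ∈ mxB k d n, u * 𝔅.det ∈ I := by
    intro u hu
    induction hu using Submodule.span_induction with
    | mem u h => obtain ⟨t, rfl⟩ := h; exact W2 t
    | zero => simp
    | add a b _ _ ha hb => rw [add_mul]; exact I.add_mem ha hb
    | smul c a _ ha => rw [smul_eq_mul, mul_assoc]; exact I.mul_mem_left _ ha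
  have hone : (1 : B k d n) ∉ mxB k d n := by
    intro h
    have e : mxB k d n = Ideal.span (X '' (Set.range (Sum.inl : Fin d → Fin d ⊕ Fin n))) := by
      rw [mxB, ← Set.range_comp]; rfl
    rw [e, mem_ideal_span_X_image] at h
    obtain ⟨i, -, hi⟩ := h 0 (by simp)
    simp at hi
  have hsum : ∑ i, (α i - 1) = δ := by
    have h1 : ∑ i, (α i - 1) + ∑ _i : Fin d, 1 = ∑ i, α i := by
      rw [← Finset.sum_add_distrib]
      exact Finset.sum_congr rfl fun i _ => Nat.sub_add_cancel (hα i)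
    simp only [Finset.sum_const, Finset.card_univ, Fintype.card_fin, smul_eq_mul, mul_one] at h1
    omega
  have hdet : 𝔅.det ∈ weightedHomogeneousSubmodule k (bwt d n) (δ, τ) := by
    rw [mem_weightedHomogeneousSubmodule]
    have := det_hom (bwt d n) 𝔅 (fun i => (α i - 1, β i)) h𝔅hom
    have e : ∑ i, (α i - 1, β i) = (δ, τ) := by
      ext
      · simpa [Prod.fst_sum] using hsum
      · simpa [Prod.snd_sum] using hτ.symm
    rwa [e] at this
  have hwx : 𝔅.det.IsWeightedHomogeneous (wx d n) δ := wx_of_bwt hdet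
  -- elements of the colon ideal are `T`-multiples of the determinant modulo `I`
  have hcolon : ∀ g : B k d n, (∀ t, X (Sum.inl t) * g ∈ I) →
      ∃ c : T k n, g - rename Sum.inr c * 𝔅.det ∈ I := by
    intro g hg
    obtain ⟨y, hy, z, hz, e⟩ := Submodule.mem_sup.1 (W1 g hg)
    obtain ⟨b, rfl⟩ := Ideal.mem_span_singleton'.1 hz
    obtain ⟨c, hc⟩ := exists_T_part b
    refine ⟨c, ?_⟩
    rw [← e]
    convert I.add_mem hy (hmD _ hc) using 1
    ring
  have hmul : ∀ (g : B k d n) (i N : ℕ), g.IsWeightedHomogeneous (wx d n) i → ∀ t,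
      (X (Sum.inl t) * g).IsWeightedHomogeneous (wx d n) (i + 1) := by
    intro g i N hg t
    have := (isWeightedHomogeneous_X k (wx d n) (Sum.inl t)).mul hg
    rw [add_comm]; exact this
  have hpow : ∀ (g : B k d n) (N : ℕ), (∀ u ∈ mxB k d n ^ (N + 1), u * g ∈ I) → ∀ t,
      ∀ u ∈ mxB k d n ^ N, u * (X (Sum.inl t) * g) ∈ I := by
    intro g N h t u hu
    rw [← mul_assoc]
    refine h _ ?_
    rw [pow_succ]
    exact Ideal.mul_mem_mul hu (Ideal.subset_span ⟨t, rfl⟩)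
  have hkill : ∀ (N i : ℕ) (g : B k d n), δ < i → g.IsWeightedHomogeneous (wx d n) i →
      (∀ u ∈ mxB k d n ^ N, u * g ∈ I) → g ∈ I := by
    intro N
    induction N with
    | zero => intro i g _ _ h; simpa using h 1 (by simp)
    | succ N ih =>
      intro i g hi hg h
      obtain ⟨c, hc⟩ := hcolon g fun t =>
        ih (i + 1) _ (by omega) (hmul g i N hg t) (hpow g N h t)
      rw [hI] at hc
      have h1 := comp_mem (fun i => wx_of_bwt (hbihom i)) hc i
      have h2 : (rename Sum.inr c * 𝔅.det : B k d n).IsWeightedHomogeneous (wx d n) δ := by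
        simpa using (rename_wx c).mul hwx
      rw [map_sub, hg.weightedHomogeneousComponent_same,
        h2.weightedHomogeneousComponent_ne i (by omega), sub_zero, ← hI] at h1
      exact h1
  refine ⟨fun h => hone (W3 1 (by simpa using h)), hdet, ?_, ?_⟩
  · ext g
    rw [Submodule.mem_colon]
    constructor
    · intro h
      refine W1 g fun t => ?_
      have := h (X (Sum.inl t)) (Ideal.subset_span ⟨t, rfl⟩)
      rwa [smul_eq_mul, mul_comm] at this
    · intro h u hu
      obtain ⟨y, hy, z, hz, rfl⟩ := Submodule.mem_sup.1 h
      obtain ⟨b, rfl⟩ := Ideal.mem_span_singleton'.1 hz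
      have := I.add_mem (I.mul_mem_left u hy) (I.mul_mem_left b (hmD u hu))
      rw [smul_eq_mul]
      convert this using 1
      ring
  · have hS : SxDegZ k d n I (δ : ℤ) = SxDeg k d n I δ := by simp [SxDegZ]
    rw [AcompZ, hS]
    apply le_antisymm
    · rintro z ⟨hz1, hz2⟩
      obtain ⟨g, hg, rfl⟩ := mem_SxDeg hz2
      obtain ⟨N, hN⟩ := (mem_H0 g).1 hz1
      have hN' : ∀ u ∈ mxB k d n ^ (N + 1), u * g ∈ I := fun u hu =>
        hN u (Ideal.pow_le_pow_right (Nat.le_succ N) hu)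
      obtain ⟨c, hc⟩ := hcolon g fun t =>
        hkill N (δ + 1) _ (by omega) (hmul g δ N hg t) (hpow g N hN' t)
      rw [Submodule.mem_span_singleton]
      exact ⟨c, by rw [smul_mk]; exact (Ideal.Quotient.eq.2 hc).symm⟩
    · rw [Submodule.span_le, Set.singleton_subset_iff]
      refine ⟨(mem_H0 _).2 ⟨1, by simpa using hmD⟩, Submodule.subset_span ⟨_, hwx, rfl⟩⟩

end Stmt4
end
end

section
/- Let (R,m) be a Cohen–Macaulay local ring of dimension d and let E be a finitely generated torsion-free R-module of rank e ≥ 1, of projective dimension one, minimally generated by μ(E) = d+e elements, satisfying the condition G_d. Let 0 → R^d →φ R^{d+e} → E → 0 be a minimal free resolution, B = R[y_1,…,y_{d+e}], and L = (ℓ_1,…,ℓ_d) where [ℓ_1 … ℓ_d] = [y_1 … y_{d+e}]·φ, so that S(E) ≅ B/L. Then dim S(E) = d+e and the ideal L is generated by the B-regular sequence ℓ_1,…,ℓ_d. -/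
/-!
STATEMENT 5: Let `(R,m)` be a Cohen–Macaulay (Noetherian) local ring of dimension `d`
and `E` a finitely generated torsion-free `R`-module of rank `e ≥ 1`, of projective
dimension one, minimally generated by `μ(E) = d+e` elements, satisfying `G_d`.  If
`0 → R^d →φ R^{d+e} → E → 0` is a minimal free resolution, `B = R[y_1,…,y_{d+e}]` and
`L = (ℓ_1,…,ℓ_d)` with `[ℓ_1 … ℓ_d] = [y_1 … y_{d+e}]·φ` (so `S(E) ≅ B/L`), then
`dim S(E) = d+e` and `ℓ_1,…,ℓ_d` is a `B`-regular sequence.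
-/

open MvPolynomial

noncomputable section

namespace Stmt5

/-- `a` is a nonzerodivisor modulo the ideal `J`. -/
def Reg {A : Type*} [CommRing A] (J : Ideal A) (a : A) : Prop := ∀ b, a * b ∈ J → b ∈ J

/-- `P` is an associated prime of `A / J`. -/
def AssP {A : Type*} [CommRing A] (J P : Ideal A) : Prop :=
  P.IsPrime ∧ ∃ u, ∀ r, r ∈ P ↔ r * u ∈ J

/-- there is a regular sequence of length `n` on `A / J`, in the ideal `m`. -/
def HasReg {A : Type*} [CommRing A] (m : Ideal A) : ℕ → Ideal A → Prop
  | 0, _ => True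
  | n + 1, J => ∃ x ∈ m, Reg J x ∧ HasReg m n (J ⊔ Ideal.span {x})

section loc
variable {A : Type*} [CommRing A]

lemma mem_sup_single {J : Ideal A} {x a : A} :
    a ∈ J ⊔ Ideal.span {x} ↔ ∃ b, a - x * b ∈ J := by
  rw [Submodule.mem_sup]
  constructor
  · rintro ⟨j, hj, y, hy, rfl⟩
    obtain ⟨b, rfl⟩ := Ideal.mem_span_singleton'.1 hy
    exact ⟨b, by rw [mul_comm x b]; simpa using hj⟩
  · rintro ⟨b, hb⟩
    exact ⟨_, hb, x * b, Ideal.mul_mem_right _ _ (Ideal.mem_span_singleton_self x), by ring⟩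

variable [IsNoetherianRing A]

lemma assP_iff (J P : Ideal A) : AssP J P ↔ P ∈ associatedPrimes A (A ⧸ J) := by
  rw [AssociatedPrimes.mem_iff, isAssociatedPrime_iff, AssP]
  refine and_congr_right fun _ => ?_
  constructor
  · rintro ⟨u, hu⟩
    refine ⟨Ideal.Quotient.mk J u, ?_⟩
    ext r
    rw [hu, Submodule.mem_colon_singleton, Submodule.mem_bot, ← Ideal.Quotient.eq_zero_iff_mem]
    rfl
  · rintro ⟨x, hx⟩
    obtain ⟨u, rfl⟩ := Ideal.Quotient.mk_surjective x
    refine ⟨u, fun r => ?_⟩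
    rw [hx, Submodule.mem_colon_singleton, Submodule.mem_bot, ← Ideal.Quotient.eq_zero_iff_mem]
    rfl

lemma exists_assP {J : Ideal A} {u : A} (hu : u ∉ J) :
    ∃ P, AssP J P ∧ ∀ r, r * u ∈ J → r ∈ P := by
  obtain ⟨P, hP, h⟩ := exists_le_isAssociatedPrime_of_isNoetherianRing A
    (Ideal.Quotient.mk J u) (by rwa [Ne, Ideal.Quotient.eq_zero_iff_mem])
  refine ⟨P, (assP_iff J P).2 hP, fun r hr => h ?_⟩
  rw [Submodule.mem_colon_singleton, Submodule.mem_bot]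
  exact (Ideal.Quotient.eq_zero_iff_mem (I := J)).2 hr

lemma exists_assP_of_not_reg {J : Ideal A} {a : A} (h : ¬ Reg J a) :
    ∃ P, AssP J P ∧ a ∈ P := by
  simp only [Reg, not_forall] at h
  obtain ⟨b, hb, hbJ⟩ := h
  obtain ⟨P, hP, h⟩ := exists_assP hbJ
  exact ⟨P, hP, h _ hb⟩

/-- prime avoidance for three ideals -/
lemma exists_reg_three [IsLocalRing A] {J₁ J₂ J₃ : Ideal A}
    (h₁ : ¬ AssP J₁ (IsLocalRing.maximalIdeal A)) (h₂ : ¬ AssP J₂ (IsLocalRing.maximalIdeal A))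
    (h₃ : ¬ AssP J₃ (IsLocalRing.maximalIdeal A)) :
    ∃ z ∈ IsLocalRing.maximalIdeal A, Reg J₁ z ∧ Reg J₂ z ∧ Reg J₃ z := by
  by_contra hcon
  push Not at hcon
  let T : Set (Ideal A) := associatedPrimes A (A ⧸ J₁) ∪ associatedPrimes A (A ⧸ J₂) ∪
    associatedPrimes A (A ⧸ J₃)
  have hT : T.Finite := ((associatedPrimes.finite A _).union (associatedPrimes.finite A _)).union
    (associatedPrimes.finite A _)
  have hsub : ((IsLocalRing.maximalIdeal A : Ideal A) : Set A) ⊆ ⋃ P ∈ T, ((id P : Ideal A) : Set A) := by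
    intro z hz
    simp only [Set.mem_iUnion]
    by_cases r1 : Reg J₁ z
    · by_cases r2 : Reg J₂ z
      · obtain ⟨P, hP, hz⟩ := exists_assP_of_not_reg (hcon z hz r1 r2)
        exact ⟨P, Or.inr ((assP_iff _ _).1 hP), hz⟩
      · obtain ⟨P, hP, hz⟩ := exists_assP_of_not_reg r2
        exact ⟨P, Or.inl (Or.inr ((assP_iff _ _).1 hP)), hz⟩
    · obtain ⟨P, hP, hz⟩ := exists_assP_of_not_reg r1
      exact ⟨P, Or.inl (Or.inl ((assP_iff _ _).1 hP)), hz⟩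
  rw [Ideal.subset_union_prime_finite hT (f := id) ⊤ ⊤] at hsub
  · obtain ⟨P, hP, hle⟩ := hsub
    have hPp : P.IsPrime := by
      rcases hP with (h | h) | h <;> exact h.1
    have : P = IsLocalRing.maximalIdeal A :=
      le_antisymm (IsLocalRing.le_maximalIdeal hPp.ne_top) hle
    subst this
    rcases hP with (h | h) | h
    · exact h₁ ((assP_iff _ _).2 h)
    · exact h₂ ((assP_iff _ _).2 h)
    · exact h₃ ((assP_iff _ _).2 h)
  · intro P hP _ _
    rcases hP with (h | h) | h <;> exact h.1

lemma not_assP_of_reg {m J : Ideal A} {x : A} (hx : x ∈ m) (h : Reg J x) : ¬ AssP J m := by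
  rintro ⟨hm, u, hu⟩
  have : u ∈ J := h _ ((hu x).1 hx)
  exact hm.ne_top ((Ideal.eq_top_iff_one _).2 ((hu 1).2 (by simpa using this)))

lemma assP_swap {m J : Ideal A} [m.IsMaximal] {x a : A} (hx : x ∈ m) (ha : a ∈ m)
    (hxr : Reg J x) (har : Reg J a)
    (h : AssP (J ⊔ Ideal.span {x}) m) : AssP (J ⊔ Ideal.span {a}) m := by
  obtain ⟨hm, u, hu⟩ := h
  have hu0 : u ∉ J ⊔ Ideal.span {x} := fun hh =>
    hm.ne_top ((Ideal.eq_top_iff_one _).2 ((hu 1).2 (by simpa using hh)))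
  obtain ⟨v, hv⟩ := mem_sup_single.1 ((hu a).1 ha)
  have hv0 : v ∉ J ⊔ Ideal.span {a} := by
    intro hh
    obtain ⟨t, ht⟩ := mem_sup_single.1 hh
    apply hu0
    refine mem_sup_single.2 ⟨t, har _ ?_⟩
    have := J.add_mem hv (J.mul_mem_left x ht)
    convert this using 1; ring
  have hmv : ∀ r ∈ m, r * v ∈ J ⊔ Ideal.span {a} := by
    intro r hr
    obtain ⟨w, hw⟩ := mem_sup_single.1 ((hu r).1 hr)
    refine mem_sup_single.2 ⟨w, hxr _ ?_⟩
    have := J.sub_mem (J.mul_mem_left a hw) (J.mul_mem_left r hv)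
    convert this using 1; ring
  refine ⟨hm, v, fun r => ⟨hmv r, fun hr => ?_⟩⟩
  by_contra hrm
  obtain ⟨s, t, ht, hst⟩ := (Ideal.IsMaximal.exists_inv ‹m.IsMaximal› hrm)
  apply hv0
  have : v = s * (r * v) + t * v := by rw [← mul_assoc, ← add_mul, hst, one_mul]
  rw [this]
  exact Ideal.add_mem _ (Ideal.mul_mem_left _ _ hr) (hmv t ht)

lemma reg_swap {J : Ideal A} {x z : A} (hx : Reg J x) (hz : Reg (J ⊔ Ideal.span {x}) z) :
    Reg (J ⊔ Ideal.span {z}) x := by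
  intro a ha
  obtain ⟨b, hb⟩ := mem_sup_single.1 ha
  have : b ∈ J ⊔ Ideal.span {x} := by
    apply hz
    refine mem_sup_single.2 ⟨a, ?_⟩
    have := J.neg_mem hb
    convert this using 1; ring
  obtain ⟨c, hc⟩ := mem_sup_single.1 this
  refine mem_sup_single.2 ⟨c, hx _ ?_⟩
  have := J.add_mem hb (J.mul_mem_left z hc)
  convert this using 1; ring

lemma sup_swap (J : Ideal A) (x z : A) :
    J ⊔ Ideal.span {x} ⊔ Ideal.span {z} = J ⊔ Ideal.span {z} ⊔ Ideal.span {x} :=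
  sup_right_comm _ _ _

/-- depth drops by at most (exactly) one. -/
lemma hasReg_drop [IsLocalRing A] (n : ℕ) : ∀ (J : Ideal A) (a : A),
    a ∈ IsLocalRing.maximalIdeal A → Reg J a →
    HasReg (IsLocalRing.maximalIdeal A) (n + 1) J →
    HasReg (IsLocalRing.maximalIdeal A) n (J ⊔ Ideal.span {a}) := by
  induction n with
  | zero => intros; trivial
  | succ n ih =>
    rintro J a ha har ⟨x, hx, hxr, hH⟩
    have h1 : ¬ AssP (J ⊔ Ideal.span {x}) (IsLocalRing.maximalIdeal A) := by
      obtain ⟨y, hy, hyr, -⟩ := hH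
      exact not_assP_of_reg hy hyr
    have h2 : ¬ AssP (J ⊔ Ideal.span {a}) (IsLocalRing.maximalIdeal A) :=
      fun h => h1 (assP_swap ha hx har hxr h)
    have h3 : ¬ AssP J (IsLocalRing.maximalIdeal A) := not_assP_of_reg hx hxr
    obtain ⟨z, hz, hz1, hz2, hz3⟩ := exists_reg_three h1 h2 h3
    have s1 := ih _ z hz hz1 hH
    rw [sup_swap] at s1
    have s2 : HasReg (IsLocalRing.maximalIdeal A) (n + 1) (J ⊔ Ideal.span {z}) :=
      ⟨x, hx, reg_swap hxr hz1, s1⟩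
    have s3 := ih _ a ha (reg_swap har hz2) s2
    rw [sup_swap] at s3
    exact ⟨z, hz, hz2, s3⟩

lemma assP_step [IsLocalRing A] {J P : Ideal A} {x : A} (hx : x ∈ IsLocalRing.maximalIdeal A)
    (hxr : Reg J x) (hP : AssP J P) :
    ∃ Q, AssP (J ⊔ Ideal.span {x}) Q ∧ P ≤ Q ∧ x ∈ Q := by
  obtain ⟨hPp, u, hu⟩ := hP
  have hu0 : u ∉ J := fun hh =>
    hPp.ne_top ((Ideal.eq_top_iff_one _).2 ((hu 1).2 (by simpa using hh)))
  let N : Ideal A :=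
    { carrier := {a | ∀ r ∈ P, r * a ∈ J}
      add_mem' := fun {a b} ha hb r hr => by rw [mul_add]; exact J.add_mem (ha r hr) (hb r hr)
      zero_mem' := fun r _ => by simp
      smul_mem' := fun c a ha r hr => by
        rw [smul_eq_mul, mul_left_comm]; exact J.mul_mem_left _ (ha r hr) }
  have hNdef : ∀ a, a ∈ N ↔ ∀ r ∈ P, r * a ∈ J := fun a => Iff.rfl
  have hN : ¬ N ≤ J ⊔ Ideal.span {x} := by
    intro hle
    have : N ≤ J ⊔ (IsLocalRing.maximalIdeal A) • N := by
      intro a ha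
      obtain ⟨b, hb⟩ := mem_sup_single.1 (hle ha)
      have hbN : b ∈ N := by
        rw [hNdef]
        intro r hr
        apply hxr
        have := J.sub_mem ((hNdef a).1 ha r hr) (J.mul_mem_left r hb)
        convert this using 1; ring
      rw [Submodule.mem_sup]
      exact ⟨_, hb, x * b, Submodule.smul_mem_smul hx hbN, by ring⟩
    have h2 := Submodule.le_of_le_smul_of_le_jacobson_bot (IsNoetherian.noetherian N)
      (IsLocalRing.maximalIdeal_le_jacobson _) this
    exact hu0 (h2 ((hNdef u).2 fun r hr => (hu r).1 hr))
  obtain ⟨a, haN, ha⟩ := SetLike.not_le_iff_exists.1 hN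
  obtain ⟨Q, hQ, h⟩ := exists_assP ha
  refine ⟨Q, hQ, fun r hr => h _ (Ideal.mem_sup_left ((hNdef a).1 haN r hr)), h _ ?_⟩
  exact Ideal.mem_sup_right (Ideal.mul_mem_right _ _ (Ideal.mem_span_singleton_self x))

/-- dimension of `A/P` at least the depth for associated primes. -/
lemma le_dim_of_assP [IsLocalRing A] (n : ℕ) : ∀ (J P : Ideal A), AssP J P →
    HasReg (IsLocalRing.maximalIdeal A) n J → (n : WithBot ℕ∞) ≤ ringKrullDim (A ⧸ P) := by
  induction n with
  | zero =>
    intro J P hP _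
    have := hP.1
    have : Nontrivial (A ⧸ P) := Ideal.Quotient.nontrivial_iff.2 hP.1.ne_top
    exact ringKrullDim_nonneg_of_nontrivial
  | succ n ih =>
    rintro J P hP ⟨x, hx, hxr, hH⟩
    obtain ⟨Q, hQ, hPQ, hxQ⟩ := assP_step hx hxr hP
    have hxP : x ∉ P := by
      intro hxP
      exact not_assP_of_reg hxP hxr hP
    have h1 := ih _ Q hQ hH
    have := hP.1
    have hreg : Ideal.Quotient.mk P x ∈ nonZeroDivisors (A ⧸ P) := by
      rw [mem_nonZeroDivisors_iff_ne_zero, Ne, Ideal.Quotient.eq_zero_iff_mem]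
      exact hxP
    have h2 := ringKrullDim_quotient_succ_le_of_nonZeroDivisor hreg
    have h3 : ringKrullDim (A ⧸ Q) ≤
        ringKrullDim ((A ⧸ P) ⧸ Ideal.span {Ideal.Quotient.mk P x}) := by
      let f : A ⧸ P →+* A ⧸ Q := Ideal.Quotient.factor hPQ
      have hf : Function.Surjective f := Ideal.Quotient.factor_surjective hPQ
      refine ringKrullDim_le_of_surjective (Ideal.Quotient.lift (Ideal.span {Ideal.Quotient.mk P x}) f ?_)
        (Ideal.Quotient.lift_surjective_of_surjective _ _ hf)
      intro a ha
      rw [← RingHom.mem_ker]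
      revert a
      change Ideal.span {Ideal.Quotient.mk P x} ≤ RingHom.ker f
      rw [Ideal.span_singleton_le_iff_mem, RingHom.mem_ker]
      exact Ideal.Quotient.eq_zero_iff_mem.2 hxQ
    refine le_trans ?_ h2
    push_cast
    gcongr
    exact h1.trans h3

/-- In the Cohen-Macaulay situation an element which drops the dimension is regular. -/
lemma reg_of_dim_drop [IsLocalRing A] (n : ℕ) (J : Ideal A) (a : A)
    (hH : HasReg (IsLocalRing.maximalIdeal A) (n + 1) J)
    (hd : ringKrullDim (A ⧸ (J ⊔ Ideal.span {a})) ≤ (n : WithBot ℕ∞)) : Reg J a := by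
  by_contra hr
  obtain ⟨P, hP, haP⟩ := exists_assP_of_not_reg hr
  have h1 := le_dim_of_assP _ J P hP hH
  have hJP : J ≤ P := by
    obtain ⟨_, u, hu⟩ := hP
    exact fun r hr => (hu r).2 (J.mul_mem_right _ hr)
  have h2 : ringKrullDim (A ⧸ P) ≤ ringKrullDim (A ⧸ (J ⊔ Ideal.span {a})) :=
    ringKrullDim_le_of_surjective _ (Ideal.Quotient.factor_surjective
      (sup_le hJP ((Ideal.span_singleton_le_iff_mem _).2 haP)))
  have := (h1.trans h2).trans hd
  have h3 : n + 1 ≤ n := by exact_mod_cast this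
  omega

end loc

section seq
variable {A : Type*} [CommRing A]

/-- the ideal generated by the first `i` elements of a sequence -/
def JJ (g : ℕ → A) (i : ℕ) : Ideal A := Ideal.span (g '' Set.Iio i)

lemma JJ_zero (g : ℕ → A) : JJ g 0 = ⊥ := by simp [JJ]

lemma JJ_succ (g : ℕ → A) (i : ℕ) : JJ g (i + 1) = JJ g i ⊔ Ideal.span {g i} := by
  have : Set.Iio (i + 1) = Set.Iio i ∪ {i} := by
    ext j; simp only [Set.mem_Iio, Set.mem_union, Set.mem_singleton_iff]; omega
  rw [JJ, this, Set.image_union, Ideal.span_union, Set.image_singleton, JJ]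

lemma isWeaklyRegular_iff_reg (rs : List A) (g : ℕ → A)
    (hg : ∀ i (h : i < rs.length), g i = rs[i]) :
    RingTheory.Sequence.IsWeaklyRegular A rs ↔ ∀ i < rs.length, Reg (JJ g i) (g i) := by
  rw [RingTheory.Sequence.isWeaklyRegular_iff]
  refine forall_congr' fun i => forall_congr' fun hi => ?_
  have h1 : (Ideal.ofList (rs.take i) • ⊤ : Submodule A A) = JJ g i := by
    rw [Ideal.smul_eq_mul, Ideal.mul_top, JJ, Ideal.ofList]
    congr 1
    ext a
    simp only [Set.mem_ofPred_eq, Set.mem_image, Set.mem_Iio, List.mem_iff_getElem,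
      List.length_take, List.getElem_take]
    constructor
    · rintro ⟨j, hj, rfl⟩
      exact ⟨j, by omega, hg j (by omega)⟩
    · rintro ⟨j, hj, rfl⟩
      exact ⟨j, by omega, (hg j (by omega)).symm⟩
  rw [h1, isSMulRegular_iff_right_eq_zero_of_smul, hg i hi]
  constructor
  · intro h b hb
    have := h (Ideal.Quotient.mk _ b) (Ideal.Quotient.eq_zero_iff_mem.2 hb)
    exact Ideal.Quotient.eq_zero_iff_mem.1 this
  · intro h x hx
    obtain ⟨b, rfl⟩ := Ideal.Quotient.mk_surjective x
    exact Ideal.Quotient.eq_zero_iff_mem.2 (h b (Ideal.Quotient.eq_zero_iff_mem.1 hx))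

lemma hasReg_of_seq (m : Ideal A) (g : ℕ → A) (l k : ℕ) (hgm : ∀ i < k, g i ∈ m)
    (hr : ∀ i < k, Reg (JJ g i) (g i)) (hl : HasReg m l (JJ g k)) : HasReg m (l + k) ⊥ := by
  induction k generalizing l with
  | zero => simpa [JJ_zero] using hl
  | succ k ih =>
    have := ih (l + 1) (fun i hi => hgm i (by omega)) (fun i hi => hr i (by omega))
      ⟨g k, hgm k (by omega), hr k (by omega), by rwa [← JJ_succ]⟩
    convert this using 1; omega

lemma dim_quot_le [IsNoetherianRing A] [IsLocalRing A] (J : Ideal A) (a : A)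
    (ha : a ∈ IsLocalRing.maximalIdeal A) :
    ringKrullDim (A ⧸ J) ≤ ringKrullDim (A ⧸ (J ⊔ Ideal.span {a})) + 1 := by
  by_cases hJ : J = ⊤
  · have : Subsingleton (A ⧸ J) := Ideal.Quotient.subsingleton_iff.2 hJ
    rw [ringKrullDim_eq_bot_of_subsingleton]
    exact bot_le
  have : Nontrivial (A ⧸ J) := Ideal.Quotient.nontrivial_iff.2 hJ
  have hloc : IsLocalRing (A ⧸ J) :=
    IsLocalRing.of_surjective' (Ideal.Quotient.mk J) Ideal.Quotient.mk_surjective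
  have ham : Ideal.Quotient.mk J a ∈ IsLocalRing.maximalIdeal (A ⧸ J) := by
    rw [IsLocalRing.mem_maximalIdeal, mem_nonunits_iff]
    intro hu
    have := (IsLocalHom.of_surjective (Ideal.Quotient.mk J) Ideal.Quotient.mk_surjective).map_nonunit _ hu
    exact ha this
  have h := ringKrullDim_le_ringKrullDim_quotient_add_card {Ideal.Quotient.mk J a} (by
    intro x hx
    simp only [Finset.coe_singleton, Set.mem_singleton_iff] at hx
    rw [hx, IsLocalRing.ringJacobson_eq_maximalIdeal]
    exact ham)
  rw [Finset.coe_singleton, Finset.card_singleton, Nat.cast_one] at h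
  have e := ringKrullDim_eq_of_ringEquiv (DoubleQuot.quotQuotEquivQuotSup J (Ideal.span {a}))
  rw [Ideal.map_span, Set.image_singleton] at e
  rwa [e] at h

lemma reg_of_dim [IsNoetherianRing A] [IsLocalRing A] (g : ℕ → A) (N k : ℕ)
    (hgm : ∀ i < k, g i ∈ IsLocalRing.maximalIdeal A)
    (hH : HasReg (IsLocalRing.maximalIdeal A) (N + k) ⊥)
    (hd : ringKrullDim (A ⧸ JJ g k) ≤ (N : WithBot ℕ∞)) :
    ∀ i < k, Reg (JJ g i) (g i) := by
  have hdim : ∀ j i, i + j = k → ringKrullDim (A ⧸ JJ g i) ≤ ((N + j : ℕ) : WithBot ℕ∞) := by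
    intro j
    induction j with
    | zero => intro i hi; obtain rfl : i = k := by omega
              simpa using hd
    | succ j ih =>
      intro i hi
      have h1 := ih (i + 1) (by omega)
      have h2 := dim_quot_le (JJ g i) (g i) (hgm i (by omega))
      rw [← JJ_succ] at h2
      refine h2.trans ?_
      calc _ ≤ ((N + j : ℕ) : WithBot ℕ∞) + 1 := by gcongr
        _ = _ := by push_cast; ring
  have key : ∀ i j, i + j = k →
      HasReg (IsLocalRing.maximalIdeal A) (N + j) (JJ g i) ∧ ∀ t < i, Reg (JJ g t) (g t) := by
    intro i
    induction i with
    | zero => intro j hj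
              obtain rfl : j = k := by omega
              exact ⟨by rwa [JJ_zero], fun t ht => by omega⟩
    | succ i ih =>
      intro j hj
      obtain ⟨h1, h2⟩ := ih (j + 1) (by omega)
      have hr : Reg (JJ g i) (g i) := by
        refine reg_of_dim_drop (N + j) _ _ h1 ?_
        rw [← JJ_succ]
        exact hdim j (i + 1) (by omega)
      refine ⟨?_, fun t ht => ?_⟩
      · rw [JJ_succ]
        exact hasReg_drop _ _ _ (hgm i (by omega)) hr h1
      · rcases Nat.lt_succ_iff_lt_or_eq.1 ht with h | rfl
        · exact h2 t h
        · exact hr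
  exact (key k 0 (by omega)).2

end seq

section localize
variable {B : Type*} [CommRing B] (M : Ideal B) [M.IsPrime]


lemma reg_localize {J : Ideal B} {a : B} (h : Reg J a) :
    Reg (J.map (algebraMap B (Localization.AtPrime M))) (algebraMap B (Localization.AtPrime M) a) := by
  intro b hb
  obtain ⟨⟨b, s⟩, rfl⟩ := IsLocalization.mk'_surjective M.primeCompl b
  simp only at hb ⊢
  have hb' : algebraMap B (Localization.AtPrime M) (a * b) ∈ J.map (algebraMap B (Localization.AtPrime M)) := by
    have := Ideal.mul_mem_right (algebraMap B (Localization.AtPrime M) s) _ hb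
    rwa [mul_assoc, IsLocalization.mk'_spec, ← map_mul] at this
  rw [IsLocalization.algebraMap_mem_map_algebraMap_iff M.primeCompl] at hb'
  obtain ⟨t, ht, htb⟩ := hb'
  rw [IsLocalization.mk'_mem_map_algebraMap_iff M.primeCompl]
  refine ⟨t, ht, h _ ?_⟩
  rwa [mul_left_comm]

lemma hasReg_localize (n : ℕ) : ∀ (J : Ideal B), HasReg M n J →
    HasReg (IsLocalRing.maximalIdeal (Localization.AtPrime M)) n (J.map (algebraMap B (Localization.AtPrime M))) := by
  induction n with
  | zero => intros; trivial
  | succ n ih =>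
    rintro J ⟨x, hx, hr, hH⟩
    refine ⟨algebraMap B (Localization.AtPrime M) x, ?_, reg_localize M hr, ?_⟩
    · exact (IsLocalization.AtPrime.to_map_mem_maximal_iff (Localization.AtPrime M) M x).2 hx
    · have := ih _ hH
      rwa [Ideal.map_sup, Ideal.map_span, Set.image_singleton] at this

lemma map_JJ {C : Type*} [CommRing C] (f : B →+* C) (g : ℕ → B) (i : ℕ) :
    (JJ g i).map f = JJ (fun j => f (g j)) i := by
  rw [JJ, JJ, Ideal.map_span, Set.image_image]

end localize

section poly
variable {R : Type*} [CommRing R] {n : ℕ}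

lemma hasReg_comap (m : Ideal R) (k : ℕ) : ∀ (I : Ideal R), HasReg m k I →
    HasReg (m.comap (constantCoeff (σ := Fin n))) k
      (I.comap (constantCoeff (σ := Fin n))) := by
  induction k with
  | zero => intros; trivial
  | succ k ih =>
    rintro I ⟨x, hx, hr, hH⟩
    refine ⟨C x, by simpa using hx, ?_, ?_⟩
    · intro b hb
      simp only [Ideal.mem_comap, map_mul, constantCoeff_C] at hb ⊢
      exact hr _ hb
    · have := ih _ hH
      convert this using 1
      ext f
      rw [mem_sup_single, Ideal.mem_comap, mem_sup_single]
      constructor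
      · rintro ⟨b, hb⟩
        exact ⟨constantCoeff b, by simpa using hb⟩
      · rintro ⟨b, hb⟩
        exact ⟨C b, by simpa using hb⟩

/-- the variables as a sequence -/
def Xseq (R : Type*) [CommRing R] (n : ℕ) (i : ℕ) : MvPolynomial (Fin n) R :=
  if h : i < n then X ⟨i, h⟩ else 0

lemma mem_JJ_Xseq (i : ℕ) (hi : i ≤ n) (f : MvPolynomial (Fin n) R) :
    f ∈ JJ (Xseq R n) i ↔ ∀ m ∈ f.support, ∃ j : Fin n, j.1 < i ∧ m j ≠ 0 := by
  have : Xseq R n '' Set.Iio i = X '' {j : Fin n | j.1 < i} := by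
    ext f
    simp only [Set.mem_image, Set.mem_Iio, Set.mem_ofPred_eq]
    constructor
    · rintro ⟨j, hj, rfl⟩
      exact ⟨⟨j, by omega⟩, hj, by rw [Xseq, dif_pos]⟩
    · rintro ⟨j, hj, rfl⟩
      exact ⟨j, hj, by rw [Xseq, dif_pos]⟩
  rw [JJ, this, mem_ideal_span_X_image]
  simp

lemma reg_Xseq (i : ℕ) (hi : i < n) : Reg (JJ (Xseq R n) i) (Xseq R n i) := by
  intro b hb
  rw [mem_JJ_Xseq i hi.le] at hb ⊢
  intro m hm
  rw [Xseq, dif_pos hi] at hb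
  obtain ⟨j, hj, hmj⟩ := hb (Finsupp.single ⟨i, hi⟩ 1 + m) (by
    rw [mem_support_iff, coeff_X_mul]; exact mem_support_iff.1 hm)
  refine ⟨j, hj, ?_⟩
  rwa [Finsupp.add_apply, Finsupp.single_apply, if_neg, zero_add] at hmj
  rintro rfl
  simp at hj

lemma JJ_Xseq_all : JJ (Xseq R n) n = (⊥ : Ideal R).comap (constantCoeff (σ := Fin n)) := by
  ext f
  rw [mem_JJ_Xseq n le_rfl, Ideal.mem_comap, Ideal.mem_bot, constantCoeff_eq,
    ← notMem_support_iff]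
  constructor
  · intro h h0
    obtain ⟨j, -, hj⟩ := h 0 h0
    exact hj rfl
  · intro h m hm
    have : m ≠ 0 := by rintro rfl; exact h hm
    obtain ⟨j, hj⟩ := Finsupp.ne_iff.1 this
    exact ⟨j, j.2, hj⟩

lemma hasReg_poly (m : Ideal R) (k : ℕ) (h : HasReg m k ⊥) :
    HasReg (m.comap (constantCoeff (σ := Fin n))) (k + n) ⊥ := by
  refine hasReg_of_seq _ (Xseq R n) k n ?_ (fun i hi => reg_Xseq i hi) ?_
  · intro i hi
    rw [Xseq, dif_pos hi]
    simp
  · rw [JJ_Xseq_all]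
    exact hasReg_comap m k ⊥ h

attribute [local instance] MvPolynomial.gradedAlgebra

lemma dec_eq (f : MvPolynomial (Fin n) R) (i : ℕ) :
    (DirectSum.decompose (homogeneousSubmodule (Fin n) R) f i : MvPolynomial (Fin n) R) =
      homogeneousComponent i f := decomposition.decompose'_apply f i

/-- descent of regularity from the localization at the irrelevant maximal ideal -/
lemma reg_descend [IsLocalRing R] (M : Ideal (MvPolynomial (Fin n) R)) [M.IsPrime]
    (hM : M = (IsLocalRing.maximalIdeal R).comap (constantCoeff (σ := Fin n)))
    (g : ℕ → MvPolynomial (Fin n) R) (hg : ∀ i, (g i).IsHomogeneous 1) (i : ℕ)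
    (h : Reg (JJ (fun j => algebraMap _ (Localization.AtPrime M) (g j)) i)
      (algebraMap _ (Localization.AtPrime M) (g i))) : Reg (JJ g i) (g i) := by
  have hJ : (JJ g i).IsHomogeneous (homogeneousSubmodule (Fin n) R) := by
    apply Ideal.homogeneous_span
    rintro _ ⟨j, -, rfl⟩
    exact ⟨1, hg j⟩
  intro f hf
  rw [hJ.mem_iff] at hf ⊢
  intro k
  have h1 := hf (1 + k)
  rw [DirectSum.coe_decompose_mul_add_of_left_mem _ (hg i)] at h1
  set fk : MvPolynomial (Fin n) R :=
    (DirectSum.decompose (homogeneousSubmodule (Fin n) R) f k : MvPolynomial (Fin n) R) with hfk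
  have hfkm : fk ∈ homogeneousSubmodule (Fin n) R k := SetLike.coe_mem _
  have h2 := h (algebraMap _ _ fk) (by
    rw [← map_mul, ← map_JJ]
    exact Ideal.mem_map_of_mem _ h1)
  rw [← map_JJ, IsLocalization.algebraMap_mem_map_algebraMap_iff M.primeCompl] at h2
  obtain ⟨s, hs, hsf⟩ := h2
  rw [hJ.mem_iff] at hsf
  have h3 := hsf (0 + k)
  rw [DirectSum.coe_decompose_mul_add_of_right_mem _ hfkm, dec_eq, homogeneousComponent_zero] at h3
  have hu : IsUnit (coeff 0 s) := by
    by_contra hu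
    apply hs
    rw [hM]
    exact hu
  obtain ⟨u, hu⟩ := hu
  have := (JJ g i).mul_mem_left (C (↑u⁻¹ : R)) h3
  rwa [← mul_assoc, ← C_mul, ← hu, Units.inv_mul, C_1, one_mul] at this

end poly

section heights

lemma dim_quot_le_of_height {S : Type*} [CommRing S] [IsNoetherianRing S] (I : Ideal S) (k N : ℕ)
    (h : ∀ Q : Ideal S, Q.IsPrime → I ≤ Q → (k : ℕ∞) ≤ Q.height)
    (hd : ringKrullDim S ≤ ((N + k : ℕ) : WithBot ℕ∞)) :
    ringKrullDim (S ⧸ I) ≤ (N : WithBot ℕ∞) := by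
  refine iSup_le fun p => ?_
  let p' : LTSeries (PrimeSpectrum S) := p.map (PrimeSpectrum.comap (Ideal.Quotient.mk I))
    (RingHom.strictMono_comap_of_surjective Ideal.Quotient.mk_surjective)
  have h1 : I ≤ p'.head.asIdeal := by
    intro x hx
    change Ideal.Quotient.mk I x ∈ p.head.asIdeal
    rw [Ideal.Quotient.eq_zero_iff_mem.2 hx]
    exact zero_mem _
  have h2 := h _ p'.head.2 h1
  have := p'.head.2
  obtain ⟨q, hq, hqk⟩ := p'.head.asIdeal.exists_ltSeries_length_eq_height
  rw [← hqk] at h2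
  have h2' : k ≤ q.length := by exact_mod_cast h2
  let r := q.smash p' hq
  have h3 : ((r.length : ℕ) : WithBot ℕ∞) ≤ ringKrullDim S := Order.LTSeries.length_le_krullDim r
  have h4 : r.length = q.length + p.length := rfl
  rw [h4] at h3
  have h5 : q.length + p.length ≤ N + k := by exact_mod_cast h3.trans hd
  have : p.length ≤ N := by omega
  exact_mod_cast this

variable {K : Type*} [Field K] {n : ℕ}

/-- the linear form attached to a vector -/
def form (K : Type*) [Field K] (n : ℕ) : (Fin n → K) →ₗ[K] MvPolynomial (Fin n) K :=
  Fintype.linearCombination K X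

lemma form_apply (w : Fin n → K) : form K n w = ∑ j, C (w j) * X j := by
  simp [form, Fintype.linearCombination_apply, MvPolynomial.smul_eq_C_mul]

lemma coeff_form (w : Fin n → K) (j : Fin n) :
    coeff (Finsupp.single j 1) (form K n w) = w j := by
  classical
  rw [form_apply, coeff_sum]
  simp only [coeff_C_mul, coeff_X]
  rw [Finset.sum_eq_single j]
  · simp
  · intro b _ hb
    rw [if_neg, mul_zero]
    intro h
    exact hb (Finsupp.single_left_injective one_ne_zero h)
  · simp

lemma height_ge_of_linInd (r : ℕ) : ∀ (v : Fin r → (Fin n → K)), LinearIndependent K v →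
    ∀ q : Ideal (MvPolynomial (Fin n) K), q.IsPrime → (∀ i, form K n (v i) ∈ q) →
    (r : ℕ∞) ≤ q.height := by
  induction r with
  | zero => intros; simp
  | succ r ih =>
    intro v hv q hq hvq
    rw [linearIndependent_finSucc'] at hv
    obtain ⟨hv0, hlast⟩ := hv
    set W := Submodule.span K (Set.range (fun i : Fin r => v i.castSucc)) with hW
    obtain ⟨W', hc⟩ := Submodule.exists_isCompl W
    -- projection with kernel `W`
    let f : (Fin n → K) →ₗ[K] (Fin n → K) := W'.subtype ∘ₗ Submodule.projectionOnto W' W hc.symm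
    have hker : ∀ w, f w = 0 ↔ w ∈ W := by
      intro w
      change ((Submodule.projectionOnto W' W hc.symm w : W') : Fin n → K) = 0 ↔ _
      rw [ZeroMemClass.coe_eq_zero, Submodule.projectionOnto_apply_eq_zero_iff]
    have hff : ∀ w, w - f w ∈ W := by
      intro w
      rw [← hker, map_sub, sub_eq_zero]
      change _ = ((Submodule.projectionOnto W' W hc.symm _ : W') : Fin n → K)
      rw [show f w = ((Submodule.projectionOnto W' W hc.symm w : W') : Fin n → K) from rfl,
        Submodule.projectionOnto_apply_left]
    let θ : MvPolynomial (Fin n) K →ₐ[K] MvPolynomial (Fin n) K :=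
      aeval (fun j => form K n (f (Pi.single j 1)))
    have hθ : ∀ w, θ (form K n w) = form K n (f w) := by
      intro w
      have : θ.toLinearMap ∘ₗ form K n = form K n ∘ₗ f := by
        refine LinearMap.pi_ext' fun j => LinearMap.ext_ring ?_
        simp [θ, form]
      exact LinearMap.congr_fun this w
    let P : Ideal (MvPolynomial (Fin n) K) := RingHom.ker θ
    have hP : P.IsPrime := RingHom.ker_isPrime _
    have hWq : ∀ w ∈ W, form K n w ∈ q := by
      intro w hw
      have : W ≤ (q.restrictScalars K).comap (form K n) := by
        rw [hW, Submodule.span_le]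
        rintro _ ⟨i, rfl⟩
        exact hvq _
      exact this hw
    have hPq : P ≤ q := by
      intro g hg
      have heq : (Ideal.Quotient.mkₐ K q).comp θ = Ideal.Quotient.mkₐ K q := by
        apply MvPolynomial.algHom_ext
        intro j
        have hX : (X j : MvPolynomial (Fin n) K) = form K n (Pi.single j 1) := by simp [form]
        rw [AlgHom.comp_apply, hX, hθ]
        refine (Ideal.Quotient.eq.2 ?_).symm
        rw [← map_sub]
        exact hWq _ (hff _)
      have h1 := AlgHom.congr_fun heq g
      rw [AlgHom.comp_apply, show θ g = 0 from hg, map_zero] at h1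
      exact Ideal.Quotient.eq_zero_iff_mem.1 h1.symm
    have hne : form K n (v (Fin.last r)) ∉ P := by
      intro h
      have h1 : form K n (f (v (Fin.last r))) = 0 := by rw [← hθ]; exact h
      apply hlast; change v (Fin.last r) ∈ W
      rw [← hker]
      ext j
      rw [← coeff_form (f (v (Fin.last r))) j, h1]; simp
    have hlt : P < q := lt_of_le_of_ne hPq (fun h => hne (h ▸ hvq _))
    have h1 := ih (fun i : Fin r => v i.castSucc) hv0 P hP (fun i => by
      change θ _ = 0
      rw [hθ, (hker _).2 (Submodule.subset_span ⟨i, rfl⟩), map_zero])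
    have h2 := Ideal.height_add_one_le_of_lt_of_isPrime hlt
    refine le_trans ?_ h2
    push_cast
    gcongr

lemma height_ge_finrank (W : Submodule K (Fin n → K)) (q : Ideal (MvPolynomial (Fin n) K))
    (hq : q.IsPrime) (h : ∀ w ∈ W, form K n w ∈ q) : (Module.finrank K W : ℕ∞) ≤ q.height := by
  let b := Module.finBasis K W
  refine height_ge_of_linInd _ (fun i => (b i : Fin n → K)) ?_ q hq (fun i => h _ (b i).2)
  exact b.linearIndependent.map' W.subtype W.ker_subtype

lemma height_ge_rank {R : Type*} [CommRing R] [IsNoetherianRing R] {d : ℕ}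
    (φ : Matrix (Fin n) (Fin d) R) (Q : Ideal (MvPolynomial (Fin n) R)) [Q.IsPrime]
    (p : Ideal R) [p.IsPrime] (hp : p = Q.under R)
    (hQ : ∀ i, ∑ j, C (φ j i) * X j ∈ Q) :
    p.height + ((φ.map (algebraMap R (FractionRing (R ⧸ p)))).rank : ℕ∞) ≤ Q.height := by
  have : Q.LiesOver p := ⟨hp⟩
  rw [Ideal.height_eq_height_add_of_liesOver_of_hasGoingDown p Q]
  gcongr
  set K := FractionRing (R ⧸ p) with hK
  have hmapC : p.map (algebraMap R (MvPolynomial (Fin n) R)) ≤ Q := by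
    rw [Ideal.map_le_iff_le_comap, hp]
  set Q1 := Q.map (Ideal.Quotient.mk (p.map (algebraMap R (MvPolynomial (Fin n) R)))) with hQ1
  have hQ1p : Q1.IsPrime := Ideal.isPrime_map_quotientMk_of_isPrime hmapC
  have hmem : ∀ f, Ideal.Quotient.mk (p.map (algebraMap R (MvPolynomial (Fin n) R))) f ∈ Q1 ↔
      f ∈ Q := by
    intro f
    rw [hQ1, Ideal.mem_quotient_iff_mem hmapC]
  let ε : MvPolynomial (Fin n) (R ⧸ p) ≃+*
      MvPolynomial (Fin n) R ⧸ (p.map (algebraMap R (MvPolynomial (Fin n) R))) :=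
    (quotientEquivQuotientMvPolynomial p).toRingEquiv
  have hε : ∀ f, ε (MvPolynomial.map (Ideal.Quotient.mk p) f) =
      Ideal.Quotient.mk (p.map (algebraMap R (MvPolynomial (Fin n) R))) f := by
    intro f
    have : (ε : MvPolynomial (Fin n) (R ⧸ p) →+* _).comp (MvPolynomial.map (Ideal.Quotient.mk p)) =
      Ideal.Quotient.mk (p.map (algebraMap R (MvPolynomial (Fin n) R))) := by
      apply MvPolynomial.ringHom_ext
      · intro r
        change ε (MvPolynomial.map _ (C r)) = _
        rw [map_C]
        change eval₂ _ _ (C _) = _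
        exact eval₂_C _ _ _
      · intro j
        change ε (MvPolynomial.map _ (X j)) = _
        rw [map_X]
        change eval₂ _ _ (X _) = _
        exact eval₂_X _ _ _
    exact RingHom.congr_fun this f
  set Q2 := Q1.comap ε with hQ2
  have hQ2p : Q2.IsPrime := Ideal.comap_isPrime _ _
  have hmem2 : ∀ f, MvPolynomial.map (Ideal.Quotient.mk p) f ∈ Q2 ↔ f ∈ Q := by
    intro f
    rw [← hmem, ← hε]; rfl
  rw [← RingEquiv.height_comap ε Q1, ← hQ2]
  let _ := MvPolynomial.algebraMvPolynomial (σ := Fin n) (R := R ⧸ p) (S := K)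
  have hloc : IsLocalization ((nonZeroDivisors (R ⧸ p)).map (C (σ := Fin n)))
    (MvPolynomial (Fin n) K) := MvPolynomial.isLocalization _ _
  have hdisj : Disjoint (((nonZeroDivisors (R ⧸ p)).map (C (σ := Fin n)) :
      Submonoid (MvPolynomial (Fin n) (R ⧸ p))) : Set (MvPolynomial (Fin n) (R ⧸ p))) Q2 := by
    rw [Set.disjoint_left]
    rintro _ ⟨x, hx, rfl⟩ hx2
    obtain ⟨r, rfl⟩ := Ideal.Quotient.mk_surjective x
    have h1 : C r ∈ Q := by
      rw [← hmem2, map_C]; exact hx2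
    have h2 : r ∈ p := by rw [hp]; exact h1
    exact nonZeroDivisors.ne_zero hx (Ideal.Quotient.eq_zero_iff_mem.2 h2)
  rw [← IsLocalization.height_map_of_disjoint (S := MvPolynomial (Fin n) K) _ Q2 hdisj]
  have hprime : (Q2.map (algebraMap _ (MvPolynomial (Fin n) K))).IsPrime :=
    IsLocalization.isPrime_of_isPrime_disjoint _ _ Q2 hQ2p hdisj
  refine height_ge_finrank _ _ hprime ?_
  rintro _ ⟨u, rfl⟩
  set q := Q2.map (algebraMap (MvPolynomial (Fin n) (R ⧸ p)) (MvPolynomial (Fin n) K)) with hq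
  have hcol : ∀ i, form K n (fun j => algebraMap R K (φ j i)) ∈ q := by
    intro i
    have h1 := Ideal.mem_map_of_mem (algebraMap _ (MvPolynomial (Fin n) K)) ((hmem2 _).2 (hQ i))
    convert h1 using 1
    rw [form_apply, algebraMap_def]
    simp only [map_sum, map_mul, map_C, map_X]
    rfl
  have : (φ.map (algebraMap R K)).mulVecLin u =
      ∑ i, u i • (fun j => algebraMap R K (φ j i)) := by
    ext j
    simp [Matrix.mulVec, dotProduct, mul_comm]
  rw [this, map_sum]
  refine Ideal.sum_mem _ fun i _ => ?_
  rw [map_smul, MvPolynomial.smul_eq_C_mul]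
  exact Ideal.mul_mem_left _ _ (hcol i)

end heights

section ranks

lemma rank_of_gens {R : Type*} [CommRing R] {E : Type*} [AddCommGroup E] [Module R E] {n d : ℕ}
    (φ : Matrix (Fin n) (Fin d) R) (π : (Fin n → R) →ₗ[R] E) (hsurj : Function.Surjective π)
    (hker : LinearMap.ker π = LinearMap.range φ.mulVecLin) (p : Ideal R) [p.IsPrime]
    (s : Finset (LocalizedModule p.primeCompl E))
    (hs : Submodule.span (Localization.AtPrime p)
      (s : Set (LocalizedModule p.primeCompl E)) = ⊤) :
    n ≤ (φ.map (algebraMap R (FractionRing (R ⧸ p)))).rank + s.card := by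
  set K := FractionRing (R ⧸ p) with hK
  have hzero : ∀ r : R, algebraMap R K r = 0 → r ∈ p := by
    intro r hr
    rw [IsScalarTower.algebraMap_apply R (R ⧸ p) K] at hr
    have := (IsFractionRing.injective (R ⧸ p) K) (hr.trans (map_zero _).symm)
    exact Ideal.Quotient.eq_zero_iff_mem.1 this
  have hnum : ∀ x : LocalizedModule p.primeCompl E, ∃ (v : Fin n → R) (t : p.primeCompl),
      x = LocalizedModule.mk (π v) t := by
    intro x
    induction x using LocalizedModule.induction_on with
    | _ m t =>
      obtain ⟨v, rfl⟩ := hsurj m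
      exact ⟨v, t, rfl⟩
  choose v t hvt using hnum
  set ψ := φ.map (algebraMap R K) with hψ
  let F : (Fin n → K) →ₗ[K] (s → K) :=
    (Matrix.of fun (x : s) (j : Fin n) => algebraMap R K (v x.1 j)).mulVecLin
  let F' : LinearMap.ker (ψ.transpose.mulVecLin) →ₗ[K] (s → K) := F ∘ₗ Submodule.subtype _
  have hF' : Function.Injective F' := by
    rw [injective_iff_map_eq_zero]
    rintro ⟨w, hw⟩ hFw
    let h0 : (Fin n → R) →ₗ[R] K := Fintype.linearCombination R w
    have hh0 : ∀ u, h0 u = ∑ j, algebraMap R K (u j) * w j := by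
      intro u
      simp [h0, Fintype.linearCombination_apply, Algebra.smul_def]
    have hrange : LinearMap.ker π ≤ LinearMap.ker h0 := by
      rw [hker]
      rintro _ ⟨a, rfl⟩
      rw [LinearMap.mem_ker]
      have hc : h0 ∘ₗ φ.mulVecLin = 0 := by
        refine LinearMap.pi_ext' fun i => LinearMap.ext_ring ?_
        have := congrFun (LinearMap.mem_ker.1 hw) i
        simp only [Matrix.mulVecLin_apply, Matrix.mulVec, dotProduct, Matrix.transpose_apply, hψ,
          Matrix.map_apply, Pi.zero_apply] at this
        simp [hh0, this]
      exact LinearMap.congr_fun hc a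
    let N : Submodule R E := (LinearMap.ker h0).map π
    have hN : ∀ u, π u ∈ N → h0 u = 0 := by
      rintro u ⟨u', hu', h⟩
      have : u - u' ∈ LinearMap.ker π := by
        rw [LinearMap.mem_ker, map_sub, h, sub_self]
      have h2 := hrange this
      rw [LinearMap.mem_ker, map_sub, LinearMap.mem_ker.1 hu', sub_zero] at h2
      exact h2
    have htop : N.localized p.primeCompl = ⊤ := by
      rw [eq_top_iff, ← hs, Submodule.span_le]
      intro x hx
      refine (Submodule.mem_localized' _ _ _ _ _).2 ⟨π (v x), ⟨v x, ?_, rfl⟩, t x, ?_⟩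
      · have := congrFun hFw ⟨x, hx⟩
        rw [SetLike.mem_coe, LinearMap.mem_ker, hh0]
        exact this
      · rw [← IsLocalizedModule.mk_eq_mk', ← hvt]
    have : w = 0 := by
      funext j
      have h1 : LocalizedModule.mkLinearMap p.primeCompl E (π (Pi.single j 1)) ∈
        N.localized p.primeCompl := by rw [htop]; trivial
      obtain ⟨m, hm, t', hmt⟩ := (Submodule.mem_localized' _ _ _ _ _).1 h1
      rw [IsLocalizedModule.mk'_eq_iff, Submonoid.smul_def, ← map_smul,
        IsLocalizedModule.eq_iff_exists p.primeCompl] at hmt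
      obtain ⟨c, hc⟩ := hmt
      have h2 : π ((c.1 * t'.1) • Pi.single j 1) ∈ N := by
        rw [map_smul, mul_smul]
        have : c.1 • t'.1 • π (Pi.single j 1) = c • m := hc.symm
        rw [this]
        exact N.smul_mem _ hm
      have h3 := hN _ h2
      rw [map_smul, hh0, Algebra.smul_def] at h3
      rcases mul_eq_zero.1 h3 with h | h
      · exact absurd (hzero _ h) (c * t').2
      · simpa [Pi.single_apply] using h
    exact Subtype.ext this
  have h1 := LinearMap.finrank_le_finrank_of_injective hF'
  have h2 := LinearMap.finrank_range_add_finrank_ker ψ.transpose.mulVecLin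
  have h3 : Module.finrank K (LinearMap.range ψ.transpose.mulVecLin) = ψ.rank := by
    rw [← Matrix.rank_transpose]; rfl
  simp only [Module.finrank_fintype_fun_eq_card, Fintype.card_fin, Fintype.card_coe] at h1 h2
  omega

lemma rank_of_minimal {R : Type*} [CommRing R] [IsNoetherianRing R] {n d : ℕ}
    (φ : Matrix (Fin n) (Fin d) R) (hinj : Function.Injective φ.mulVecLin)
    (p : Ideal R) [p.IsPrime] (hp : p.height = 0) :
    (φ.map (algebraMap R (FractionRing (R ⧸ p)))).rank = d := by
  set K := FractionRing (R ⧸ p) with hK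
  have hzero : ∀ r : R, algebraMap R K r = 0 ↔ r ∈ p := by
    intro r
    rw [IsScalarTower.algebraMap_apply R (R ⧸ p) K, ← Ideal.Quotient.eq_zero_iff_mem]
    exact map_eq_zero_iff _ (IsFractionRing.injective (R ⧸ p) K)
  have hass : IsAssociatedPrime p R := by
    have h1 : p ∈ (Module.annihilator R R).minimalPrimes := by
      rw [Module.annihilator_eq_bot.2 inferInstance]
      exact Ideal.height_eq_zero_iff.1 hp
    exact Module.associatedPrimes.minimalPrimes_annihilator_subset_associatedPrimes R R h1
  obtain ⟨-, x, hx⟩ := isAssociatedPrime_iff.1 hass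
  have hx' : ∀ r, r ∈ p ↔ r * x = 0 := by
    intro r
    rw [hx, Submodule.mem_colon_singleton, smul_eq_mul, Submodule.mem_bot]
  have hI : Function.Injective (φ.map (algebraMap R K)).mulVecLin := by
    rw [injective_iff_map_eq_zero]
    intro u hu
    obtain ⟨b, hb⟩ := IsLocalization.exist_integer_multiples_of_finite
      (nonZeroDivisors (R ⧸ p)) u
    choose a' ha' using hb
    choose a ha using fun i => Ideal.Quotient.mk_surjective (a' i)
    have hau : ∀ i, algebraMap R K (a i) = algebraMap (R ⧸ p) K b.1 * u i := by
      intro i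
      rw [IsScalarTower.algebraMap_apply R (R ⧸ p) K, Ideal.Quotient.algebraMap_eq, ha, ha',
        Algebra.smul_def]
    have h1 : φ.mulVecLin (x • a) = 0 := by
      rw [map_smul]
      funext j
      rw [Pi.smul_apply, smul_eq_mul, mul_comm, Pi.zero_apply, ← hx', ← hzero]
      have h2 := congrFun hu j
      simp only [Matrix.mulVecLin_apply, Matrix.mulVec, dotProduct, Matrix.map_apply,
        Pi.zero_apply] at h2 ⊢
      rw [map_sum]
      simp only [map_mul, hau]
      rw [← mul_zero (algebraMap (R ⧸ p) K b.1), ← h2, Finset.mul_sum]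
      exact Finset.sum_congr rfl fun i _ => by ring
    have h2 : x • a = 0 := hinj (h1.trans (map_zero _).symm)
    funext i
    have h3 : algebraMap R K (a i) = 0 := by
      rw [hzero, hx', mul_comm]
      exact congrFun h2 i
    rw [hau] at h3
    rcases mul_eq_zero.1 h3 with h | h
    · exact absurd h (IsFractionRing.to_map_ne_zero_of_mem_nonZeroDivisors b.2)
    · exact h
  rw [Matrix.rank, LinearMap.finrank_range_of_inj hI]
  simp

end ranks

theorem symmetric_algebra_complete_intersection
    (R : Type) [CommRing R] [IsNoetherianRing R] [IsLocalRing R]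
    (d : ℕ) (hdim : ringKrullDim R = (d : WithBot ℕ∞))
    -- `R` is Cohen–Macaulay: its depth equals its dimension `d`
    (hCM : ∃ rs : List R, rs.length = d ∧ (∀ r ∈ rs, r ∈ IsLocalRing.maximalIdeal R) ∧
      RingTheory.Sequence.IsRegular R rs)
    (E : Type) [AddCommGroup E] [Module R E] [Module.Finite R E]
    -- `E` is torsion-free
    (htf : Submodule.torsion R E = ⊥)
    (e : ℕ) (he : 1 ≤ e)
    -- `0 → R^d →φ R^{d+e} →π E → 0` is a minimal free resolution (so `pd E = 1`,
    -- `rank E = e`, and `μ(E) = d+e`)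
    (φ : Matrix (Fin (d + e)) (Fin d) R)
    (hinj : Function.Injective φ.mulVecLin)
    (π : (Fin (d + e) → R) →ₗ[R] E) (hsurj : Function.Surjective π)
    (hker : LinearMap.ker π = LinearMap.range φ.mulVecLin)
    (hmin : ∀ i j, φ i j ∈ IsLocalRing.maximalIdeal R)
    (hμ : ∀ s : Finset E, Submodule.span R (s : Set E) = ⊤ → d + e ≤ s.card)
    -- `E` satisfies `G_d`: `μ(E_p) ≤ dim R_p + e − 1` whenever `1 ≤ dim R_p ≤ d−1`
    (hGd : ∀ (p : Ideal R) (_ : p.IsPrime) (c : ℕ),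
      ringKrullDim (Localization.AtPrime p) = (c : WithBot ℕ∞) → 1 ≤ c → c ≤ d - 1 →
      ∃ s : Finset (LocalizedModule p.primeCompl E), s.card ≤ c + e - 1 ∧
        Submodule.span (Localization.AtPrime p)
          (s : Set (LocalizedModule p.primeCompl E)) = ⊤)
    -- the linear forms `ℓ_i = Σ_j φ_{j i} y_j` defining the symmetric algebra
    (ℓ : Fin d → MvPolynomial (Fin (d + e)) R)
    (hℓ : ∀ i, ℓ i = ∑ j, C (φ j i) * X j)
    (L : Ideal (MvPolynomial (Fin (d + e)) R)) (hL : L = Ideal.span (Set.range ℓ)) :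
    ringKrullDim (MvPolynomial (Fin (d + e)) R ⧸ L) = ((d + e : ℕ) : WithBot ℕ∞) ∧
    RingTheory.Sequence.IsRegular (MvPolynomial (Fin (d + e)) R) (List.ofFn ℓ) := by
  have hHQ : ∀ Q : Ideal (MvPolynomial (Fin (d + e)) R), Q.IsPrime → L ≤ Q →
      (d : ℕ∞) ≤ Q.height := by
    intro Q hQ hLQ
    have hQℓ : ∀ i, ∑ j, C (φ j i) * X j ∈ Q := fun i => by
      rw [← hℓ]; apply hLQ; rw [hL]; exact Ideal.subset_span ⟨i, rfl⟩
    obtain ⟨p, hp⟩ : ∃ p, p = Q.under R := ⟨_, rfl⟩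
    have hpp : p.IsPrime := by rw [hp]; infer_instance
    have h1 := height_ge_rank φ Q p hp hQℓ
    have h2 : (p.height : WithBot ℕ∞) ≤ d := by
      rw [← hdim]; exact Ideal.height_le_ringKrullDim_of_ne_top hpp.ne_top
    have h2' : p.height ≤ (d : ℕ∞) := by exact_mod_cast h2
    obtain ⟨c, hc⟩ := ENat.ne_top_iff_exists.1 (ne_top_of_le_ne_top (ENat.natCast_ne_top d) h2')
    rw [← hc] at h1 h2'
    have hcd : c ≤ d := by exact_mod_cast h2'
    refine le_trans ?_ h1
    by_cases hc0 : c = 0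
    · rw [rank_of_minimal φ hinj p (by rw [← hc, hc0]; rfl)]
      exact le_add_self
    by_cases hcd' : c = d
    · rw [hcd']; exact le_self_add
    obtain ⟨s, hs1, hs2⟩ := hGd p hpp c
      (by rw [IsLocalization.AtPrime.ringKrullDim_eq_height p, ← hc]; rfl) (by omega) (by omega)
    have h3 := rank_of_gens φ π hsurj hker p s hs2
    have h4 : d ≤ c + (φ.map (algebraMap R (FractionRing (R ⧸ p)))).rank := by omega
    exact_mod_cast h4
  have hdB : ringKrullDim (MvPolynomial (Fin (d + e)) R) =
      (((d + e) + d : ℕ) : WithBot ℕ∞) := by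
    rw [MvPolynomial.ringKrullDim_of_isNoetherianRing, hdim, Nat.card_eq_fintype_card,
      Fintype.card_fin, add_comm (d + e) d]
    norm_cast
  refine ⟨le_antisymm (dim_quot_le_of_height L d (d + e) hHQ hdB.le) ?_, ?_⟩
  · let f : MvPolynomial (Fin (d + e)) R →+* MvPolynomial (Fin (d + e)) (IsLocalRing.ResidueField R) :=
      MvPolynomial.map (IsLocalRing.residue R)
    have hf : Function.Surjective f :=
      MvPolynomial.map_surjective _ IsLocalRing.residue_surjective
    have hfL : ∀ a ∈ L, f a = 0 := by
      intro a ha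
      have : L ≤ RingHom.ker f := by
        rw [hL, Ideal.span_le]
        rintro _ ⟨i, rfl⟩
        rw [SetLike.mem_coe, RingHom.mem_ker, hℓ, map_sum]
        refine Finset.sum_eq_zero fun j _ => ?_
        rw [map_mul, show f (C (φ j i)) = C (IsLocalRing.residue R (φ j i)) from map_C _ _,
          (IsLocalRing.residue_eq_zero_iff _).2 (hmin j i), map_zero, zero_mul]
      exact this ha
    have h1 := ringKrullDim_le_of_surjective (Ideal.Quotient.lift L f hfL)
      (Ideal.Quotient.lift_surjective_of_surjective _ _ hf)
    rw [MvPolynomial.ringKrullDim_of_isNoetherianRing, ringKrullDim_eq_zero_of_field,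
      Nat.card_eq_fintype_card, Fintype.card_fin, zero_add] at h1
    exact h1
  · obtain ⟨M, hM⟩ : ∃ M, M = (IsLocalRing.maximalIdeal R).comap
      (constantCoeff (σ := Fin (d + e)) (R := R)) := ⟨_, rfl⟩
    have hMp : M.IsPrime := by rw [hM]; infer_instance
    let g : ℕ → MvPolynomial (Fin (d + e)) R := fun i => if h : i < d then ℓ ⟨i, h⟩ else 0
    have hℓhom : ∀ i, (ℓ i).IsHomogeneous 1 := by
      intro i
      rw [hℓ]
      refine IsHomogeneous.sum _ _ _ fun j _ => ?_
      simpa using (isHomogeneous_C (Fin (d + e)) (φ j i)).mul (isHomogeneous_X R j)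
    have hℓM : ∀ i, ℓ i ∈ M := by
      intro i
      rw [hM, Ideal.mem_comap, hℓ]
      simp
    have hghom : ∀ i, (g i).IsHomogeneous 1 := by
      intro i
      by_cases h : i < d
      · simp only [g, dif_pos h]; exact hℓhom _
      · simp only [g, dif_neg h]; exact isHomogeneous_zero _ _ _
    have hgM : ∀ i, g i ∈ M := by
      intro i
      by_cases h : i < d
      · simp only [g, dif_pos h]; exact hℓM _
      · simp only [g, dif_neg h]; exact zero_mem _
    have hJL : JJ g d = L := by
      rw [hL, JJ]
      congr 1
      ext x
      constructor
      · rintro ⟨i, hi, rfl⟩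
        exact ⟨⟨i, hi⟩, by simp only [g, dif_pos (show i < d from hi)]⟩
      · rintro ⟨i, rfl⟩
        exact ⟨i, i.2, by simp only [g, dif_pos i.2]⟩
    have hR : HasReg (IsLocalRing.maximalIdeal R) d ⊥ := by
      obtain ⟨rs, hlen, hmem, hreg⟩ := hCM
      have hg' : ∀ i (h : i < rs.length), (fun i => rs.getD i 0) i = rs[i] := by
        intro i h
        simp [h]
      have h1 := (isWeaklyRegular_iff_reg rs (fun i => rs.getD i 0) hg').1 hreg.toIsWeaklyRegular
      have h2 := hasReg_of_seq (IsLocalRing.maximalIdeal R) (fun i => rs.getD i 0) 0 rs.length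
        (fun i hi => by change (fun i => rs.getD i 0) i ∈ _; rw [hg' i hi]; exact hmem _ (List.getElem_mem hi)) h1 trivial
      rwa [zero_add, hlen] at h2
    have hB := hasReg_poly (n := d + e) _ d hR
    rw [← hM] at hB
    have hB' : HasReg M ((d + e) + d) ⊥ := by
      have hnum : d + (d + e) = (d + e) + d := add_comm _ _
      exact hnum ▸ hB
    have hA := hasReg_localize M _ _ hB'
    rw [Ideal.map_bot] at hA
    let A := Localization.AtPrime M
    let gA : ℕ → A := fun j => algebraMap _ A (g j)
    have hdA : ringKrullDim (A ⧸ JJ gA d) ≤ ((d + e : ℕ) : WithBot ℕ∞) := by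
      refine dim_quot_le_of_height (JJ gA d) d (d + e) ?_ ?_
      · intro Q hQ hJQ
        rw [← IsLocalization.height_under M.primeCompl Q]
        refine hHQ _ inferInstance ?_
        rw [← hJL]
        refine Ideal.map_le_iff_le_comap.1 ?_
        rw [map_JJ]
        exact hJQ
      · rw [IsLocalization.AtPrime.ringKrullDim_eq_height M, ← hdB]
        exact Ideal.height_le_ringKrullDim_of_ne_top hMp.ne_top
    have hregA := reg_of_dim gA (d + e) d (fun i _ => by
      rw [← Localization.AtPrime.map_eq_maximalIdeal]
      exact Ideal.mem_map_of_mem _ (hgM i)) hA hdA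
    refine ⟨(isWeaklyRegular_iff_reg (List.ofFn ℓ) g ?_).2 ?_, ?_⟩
    · intro i h
      rw [List.length_ofFn] at h
      simp [g, h]
    · intro i hi
      rw [List.length_ofFn] at hi
      exact reg_descend M hM g hghom i (hregA i hi)
    · intro h
      rw [Ideal.smul_eq_mul, Ideal.mul_top] at h
      refine hMp.ne_top (top_le_iff.1 (h.le.trans ?_))
      rw [Ideal.ofList, Ideal.span_le]
      intro x hx
      obtain ⟨i, rfl⟩ := List.mem_ofFn.1 hx
      exact hℓM i

end Stmt5
end
end
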